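/- arXiv:2206.00552 — 5 statements merged into one kernel-verified Lean document; each statement's English description precedes it below -/
import Mathlib

section
/- Let $S$ be a Cohen-Macaulay homogeneous affine semigroup with minimal generating set $G_S = \{a_1, \dots, a_s\} \subseteq \mathbb{N}^n$, and let $R = \Bbbk[S]$ with canonical ideal $I_R$ minimally generated by monomials $x^{v_1}, \dots, x^{v_r}$, where $V = \{v_1, \dots, v_r\} \subseteq S$. Set $S - V = \{a \in \mathbb{Z}S : a + v \in S \text{ for all } v \in V\}$. Then $R$ is nearly Gorenstein if and only if for every $a_i \in G_S$ there exist $v \in V$ and $u \in S - V$ with $a_i = u + v$. -/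
noncomputable section
noncomputable section

/-- The trace `I·I⁻¹` of an ideal `I`, pulled back to `R` from the total fraction ring:
`tr(I) = {r ∈ R | r ∈ span{ x·y | x ∈ I, y ∈ I⁻¹ }}`. -/
def traceIdeal {R : Type*} [CommRing R] (I : Ideal R) : Ideal R :=
  Submodule.comap (Algebra.linearMap R (FractionRing R))
    (Submodule.span R {z : FractionRing R | ∃ x ∈ I, ∃ y : FractionRing R,
      (∀ w ∈ I, ∃ r : R, y * algebraMap R (FractionRing R) w =
        algebraMap R (FractionRing R) r) ∧
      z = algebraMap R (FractionRing R) x * y})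

/-- `l` is a regular sequence on `R`. -/
def IsRegularSeq {R : Type*} [CommRing R] (l : List R) : Prop :=
  (∀ (i : ℕ) (hi : i < l.length) (x : R),
      x * l[i]'hi ∈ Ideal.span {y | y ∈ l.take i} → x ∈ Ideal.span {y | y ∈ l.take i}) ∧
    Ideal.span {y | y ∈ l} ≠ ⊤

/-- `R` is Cohen-Macaulay with respect to the (maximal) ideal `m`: there is a regular
sequence inside `m` whose length is the Krull dimension of `R`. -/
def IsCMWrt {R : Type*} [CommRing R] (m : Ideal R) : Prop :=
  ∃ l : List R, (∀ x ∈ l, x ∈ m) ∧ IsRegularSeq l ∧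
    (l.length : WithBot ℕ∞) = ringKrullDim R

/-- The graded maximal ideal of the affine semigroup ring `k[S]`, generated by all
monomials `x^s`, `0 ≠ s ∈ S`. -/
def sgMaxIdeal (k : Type*) [Field k] {n : ℕ} (S : AddSubmonoid (Fin n → ℕ)) :
    Ideal (AddMonoidAlgebra k ↥S) :=
  Ideal.span {x | ∃ s : ↥S, s ≠ 0 ∧ x = AddMonoidAlgebra.single s (1 : k)}

/-- Coercion `ℕⁿ → ℤⁿ`. -/
def natVecToInt {n : ℕ} (a : Fin n → ℕ) : Fin n → ℤ := fun i => (a i : ℤ)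

/-- `u ∈ S - V = {a ∈ ℤS : a + v ∈ S for all v ∈ V}`. -/
def MemSminusV {n : ℕ} (S : AddSubmonoid (Fin n → ℕ)) (V : Finset (Fin n → ℕ))
    (u : Fin n → ℤ) : Prop :=
  u ∈ AddSubgroup.closure (natVecToInt '' (S : Set (Fin n → ℕ))) ∧
    ∀ v ∈ V, ∃ s ∈ S, u + natVecToInt v = natVecToInt s

/-- Monomials are non-zero-divisors in the monoid algebra of a cancellative monoid. -/
theorem single_one_mem_nonZeroDivisors (k : Type*) [CommRing k] {M : Type*}
    [AddCommMonoid M] [IsCancelAdd M] (m : M) :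
    AddMonoidAlgebra.single m (1 : k) ∈ nonZeroDivisors (AddMonoidAlgebra k M) := by
  rw [mem_nonZeroDivisors_iff_right]
  intro x hx
  ext a
  have h : (x * AddMonoidAlgebra.single m 1).coeff (a + m) = x.coeff a * 1 :=
    AddMonoidAlgebra.coeff_mul_single_eq_coeff_mul _ fun b _ => by simp
  rw [hx] at h
  simpa using h.symm

/-- A monomial `x^g` lies in the trace of the monomial ideal generated by `x^w`, `w ∈ W`, iff
there is `v ∈ W` such that `g - v + w` lies in the monoid for every `w ∈ W`. -/
theorem single_mem_traceIdeal_span_iff (k : Type*) [Field k] {M : Type*}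
    [AddCommMonoid M] [IsCancelAdd M] (W : Set M) (g : M) :
    AddMonoidAlgebra.single g (1 : k) ∈
        traceIdeal (Ideal.span (AddMonoidAlgebra.of' k M '' W)) ↔
      ∃ v ∈ W, ∀ w ∈ W, ∃ t, g + w = v + t := by
  set R := AddMonoidAlgebra k M
  set F := FractionRing R
  have hof (m : M) : AddMonoidAlgebra.of' k M m = AddMonoidAlgebra.single m 1 := rfl
  constructor
  · intro hg
    set T : Set M := {g | ∃ v ∈ W, ∀ w ∈ W, ∃ t, g + w = v + t}
    set J : Ideal R := Ideal.span (AddMonoidAlgebra.of' k M '' T)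
    have hle : Submodule.span R {z : F | ∃ x ∈ Ideal.span (AddMonoidAlgebra.of' k M '' W),
        ∃ y : F, (∀ w ∈ Ideal.span (AddMonoidAlgebra.of' k M '' W), ∃ r : R,
          y * algebraMap R F w = algebraMap R F r) ∧ z = algebraMap R F x * y} ≤
        Submodule.map (Algebra.linearMap R F) J := by
      rw [Submodule.span_le]
      rintro _ ⟨x, hx, y, hy, rfl⟩
      induction hx using Submodule.span_induction with
      | zero => simp
      | add a b _ _ ha hb =>
        rw [map_add, add_mul]
        exact Submodule.add_mem _ ha hb
      | smul r a _ ha =>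
        rw [smul_eq_mul, map_mul, mul_assoc, ← Algebra.smul_def]
        exact Submodule.smul_mem _ r ha
      | mem a ha =>
        obtain ⟨v, hv, rfl⟩ := ha
        obtain ⟨r, hr⟩ := hy _ (Ideal.subset_span ⟨v, hv, rfl⟩)
        refine ⟨r, ?_, by rw [mul_comm, hr]; rfl⟩
        refine AddMonoidAlgebra.mem_ideal_span_of'_image.2 fun m hm => ?_
        refine ⟨m, ⟨v, hv, fun w hw => ?_⟩, 0, (zero_add m).symm⟩
        obtain ⟨s, hs⟩ := hy _ (Ideal.subset_span ⟨w, hw, rfl⟩)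
        have hrs : r * AddMonoidAlgebra.single w 1 = AddMonoidAlgebra.single v 1 * s := by
          apply IsFractionRing.injective R F
          rw [map_mul, map_mul, ← hr, ← hs, hof, hof]
          ring
        by_contra! hne
        have hcoeff : AddMonoidAlgebra.coeff (r * AddMonoidAlgebra.single w 1) (m + w) =
            AddMonoidAlgebra.coeff r m * 1 :=
          AddMonoidAlgebra.coeff_mul_single_eq_coeff_mul _ fun b _ => by simp
        rw [hrs, AddMonoidAlgebra.coeff_single_mul_of_forall_add_ne _ _ fun d => (hne d).symm,
          mul_one] at hcoeff
        exact Finsupp.mem_support_iff.1 hm hcoeff.symm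
    obtain ⟨r, hrJ, hr⟩ := hle hg
    obtain rfl : r = AddMonoidAlgebra.single g 1 := IsFractionRing.injective R F hr
    obtain ⟨m, ⟨v, hv, hm⟩, d, rfl⟩ :=
      AddMonoidAlgebra.mem_ideal_span_of'_image.1 hrJ g (by simp)
    refine ⟨v, hv, fun w hw => ?_⟩
    obtain ⟨t, ht⟩ := hm w hw
    exact ⟨d + t, by rw [add_assoc, ht, add_left_comm]⟩
  · rintro ⟨v, hv, h⟩
    set b : nonZeroDivisors R :=
      ⟨AddMonoidAlgebra.single v 1, single_one_mem_nonZeroDivisors k v⟩ with hb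
    refine Submodule.subset_span ⟨AddMonoidAlgebra.single v 1, Ideal.subset_span ⟨v, hv, rfl⟩,
      IsLocalization.mk' F (AddMonoidAlgebra.single g (1 : k) : R) b, fun x hx => ?_,
      (IsLocalization.mk'_spec' F _ b).symm⟩
    induction hx using Submodule.span_induction with
    | zero => exact ⟨0, by simp⟩
    | add a c _ _ ha hc =>
      obtain ⟨r, hr⟩ := ha
      obtain ⟨s, hs⟩ := hc
      exact ⟨r + s, by rw [map_add, mul_add, hr, hs, map_add]⟩
    | smul q a _ ha =>
      obtain ⟨r, hr⟩ := ha
      exact ⟨q * r, by rw [smul_eq_mul, map_mul, mul_left_comm, hr, map_mul]⟩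
    | mem a ha =>
      obtain ⟨w, hw, rfl⟩ := ha
      obtain ⟨t, ht⟩ := h w hw
      refine ⟨AddMonoidAlgebra.single t 1, ?_⟩
      rw [mul_comm, IsLocalization.mul_mk'_eq_mk'_of_mul, IsLocalization.mk'_eq_iff_eq_mul,
        ← map_mul, hof, hb, AddMonoidAlgebra.single_mul_single,
        AddMonoidAlgebra.single_mul_single, add_comm w, ht, add_comm v]

/-- The maximal ideal of `k[S]` is contained in an ideal iff the ideal contains the monomials of
a set of nonzero generators of `S`. -/
theorem sgMaxIdeal_le_iff (k : Type*) [Field k] {n : ℕ} {S : AddSubmonoid (Fin n → ℕ)}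
    {G : Set (Fin n → ℕ)} (hG : AddSubmonoid.closure G = S) (hG0 : 0 ∉ G)
    (J : Ideal (AddMonoidAlgebra k ↥S)) :
    sgMaxIdeal k S ≤ J ↔ ∀ g : ↥S, (g : Fin n → ℕ) ∈ G →
      AddMonoidAlgebra.single g (1 : k) ∈ J := by
  constructor
  · intro h g hg
    refine h (Ideal.subset_span ⟨g, ?_, rfl⟩)
    rintro rfl
    exact hG0 hg
  · intro h
    have key : ∀ a (ha : a ∈ AddSubmonoid.closure G), a = 0 ∨
        AddMonoidAlgebra.single (⟨a, hG ▸ ha⟩ : ↥S) (1 : k) ∈ J := by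
      intro a ha
      induction ha using AddSubmonoid.closure_induction with
      | mem x hx => exact Or.inr (h ⟨x, _⟩ hx)
      | zero => exact Or.inl rfl
      | add x y hx hy ihx ihy =>
        have hxy : AddMonoidAlgebra.single (⟨x + y, hG ▸ add_mem hx hy⟩ : ↥S) (1 : k) =
            AddMonoidAlgebra.single (⟨x, hG ▸ hx⟩ : ↥S) (1 : k) *
              AddMonoidAlgebra.single (⟨y, hG ▸ hy⟩ : ↥S) (1 : k) := by
          rw [AddMonoidAlgebra.single_mul_single, mul_one]
          rfl
        rcases ihx with rfl | ihx
        · rcases ihy with rfl | ihy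
          · exact Or.inl (add_zero 0)
          · exact Or.inr (hxy ▸ J.mul_mem_left _ ihy)
        · exact Or.inr (hxy ▸ J.mul_mem_right _ ihx)
    refine Ideal.span_le.2 ?_
    rintro _ ⟨s, hs, rfl⟩
    exact (key s (hG ▸ s.2)).resolve_left fun h0 => hs (Subtype.ext h0)

theorem natVecToInt_add {n : ℕ} (a b : Fin n → ℕ) :
    natVecToInt (a + b) = natVecToInt a + natVecToInt b := by
  ext i
  simp [natVecToInt]

theorem natVecToInt_injective {n : ℕ} : Function.Injective (natVecToInt (n := n)) := by
  intro a b h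
  ext i
  simpa [natVecToInt] using congrFun h i

/-- nearly Gorensteinness of homogeneous affine semigroup rings,
combinatorially: let `S ⊆ ℕⁿ` be a Cohen-Macaulay homogeneous affine semigroup with
minimal generating set `G`, and let the canonical ideal of `R = k[S]` be minimally
generated by the monomials `x^v`, `v ∈ V ⊆ S`.  Then `R` is nearly Gorenstein
(i.e. `m ⊆ tr(ω_R) = I_R·I_R⁻¹`) iff every `a ∈ G` can be written as `u + v` with
`v ∈ V` and `u ∈ S - V`. -/
theorem nearlyGorenstein_iff_semigroup_condition
    (k : Type*) [Field k] {n : ℕ} (S : AddSubmonoid (Fin n → ℕ))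
    -- `S` is a homogeneous affine semigroup, minimally generated by `G`,
    -- all of whose members have degree one:
    (G : Finset (Fin n → ℕ)) (hGgen : AddSubmonoid.closure ↑G = S)
    (hGmin : ∀ g ∈ G, g ∉ AddSubmonoid.closure ↑(G.erase g))
    (δ : (Fin n → ℕ) → ℕ) (hδadd : ∀ a ∈ S, ∀ b ∈ S, δ (a + b) = δ a + δ b)
    (hδ0 : δ 0 = 0) (hδG : ∀ g ∈ G, δ g = 1)
    -- `R = k[S]` is Cohen-Macaulay:
    (hCM : IsCMWrt (sgMaxIdeal k S))
    -- the canonical ideal `I_R` of `R`, minimally generated by the monomials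
    -- `x^v`, `v ∈ V`:
    (V : Finset (Fin n → ℕ)) (hVS : ∀ v ∈ V, v ∈ S) (hVne : V.Nonempty)
    (I_R : Ideal (AddMonoidAlgebra k ↥S))
    (hIR : I_R = Ideal.span
      {x | ∃ v, ∃ hv : v ∈ V, x = AddMonoidAlgebra.single (⟨v, hVS v hv⟩ : ↥S) (1 : k)})
    (hVmin : ∀ v, ∀ hv : v ∈ V,
      AddMonoidAlgebra.single (⟨v, hVS v hv⟩ : ↥S) (1 : k) ∉ Ideal.span
        {x | ∃ w, ∃ hw : w ∈ V.erase v,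
          x = AddMonoidAlgebra.single (⟨w, hVS w (Finset.mem_of_mem_erase hw)⟩ : ↥S) (1 : k)}) :
    -- nearly Gorenstein ↔ the combinatorial condition:
    sgMaxIdeal k S ≤ traceIdeal I_R ↔
      ∀ g ∈ G, ∃ v ∈ V, ∃ u : Fin n → ℤ, MemSminusV S V u ∧
        natVecToInt g = u + natVecToInt v := by
  have hspan : I_R = Ideal.span (AddMonoidAlgebra.of' k ↥S '' {v | (v : Fin n → ℕ) ∈ V}) := by
    rw [hIR]
    congr 1
    ext x
    constructor
    · rintro ⟨v, hv, rfl⟩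
      exact ⟨⟨v, hVS v hv⟩, hv, rfl⟩
    · rintro ⟨⟨v, _⟩, hv, rfl⟩
      exact ⟨v, hv, rfl⟩
  have hG0 : (0 : Fin n → ℕ) ∉ (G : Set (Fin n → ℕ)) := fun h0 => by
    simpa [hδ0] using hδG 0 h0
  have hGS : ∀ g ∈ G, g ∈ S := fun g hg => hGgen ▸ AddSubmonoid.subset_closure hg
  rw [sgMaxIdeal_le_iff k hGgen hG0, hspan]
  refine (forall₂_congr fun g _ => single_mem_traceIdeal_span_iff k _ g).trans ?_
  constructor
  · intro h g hg
    obtain ⟨v, hv, hvw⟩ := h ⟨g, hGS g hg⟩ hg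
    refine ⟨v, hv, natVecToInt g - natVecToInt v, ⟨?_, fun w hw => ?_⟩,
      (sub_add_cancel _ _).symm⟩
    · exact sub_mem (AddSubgroup.subset_closure ⟨g, hGS g hg, rfl⟩)
        (AddSubgroup.subset_closure ⟨v, v.2, rfl⟩)
    · obtain ⟨t, ht⟩ := hvw ⟨w, hVS w hw⟩ hw
      refine ⟨t, t.2, ?_⟩
      have ht' := congrArg natVecToInt (congrArg Subtype.val ht)
      simp only [AddSubmonoid.coe_add, natVecToInt_add] at ht'
      rw [sub_add_eq_add_sub, ht', add_sub_cancel_left]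
  · rintro h ⟨g, hgS⟩ hg
    obtain ⟨v, hv, u, ⟨_, hu⟩, hgu⟩ := h g hg
    refine ⟨⟨v, hVS v hv⟩, hv, fun w hw => ?_⟩
    obtain ⟨t, htS, ht⟩ := hu w hw
    refine ⟨⟨t, htS⟩, Subtype.ext (natVecToInt_injective ?_)⟩
    simp only [AddSubmonoid.coe_add, natVecToInt_add]
    rw [hgu, ← ht]
    abel

end
end
end

section
/- Let $S$ be a Cohen-Macaulay homogeneous affine semigroup with canonical module generated in degrees given by the set $V \subseteq S$, and let $V_{\min}$ be the elements of $V$ of minimal degree. Let $E$ be the set of extremal rays of the cone $\mathbb{R}_{\geq 0} S$. If $|V_{\min}| = 1$ and $|V| \geq 2$, then there exists an extremal ray generator $a \in E \cap G_S$ that cannot be written as $v + u$ with $v \in V_{\min}$ and $u \in S - V$. -/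
noncomputable section
noncomputable section

/-- Coercion `ℕⁿ → ℝⁿ`. -/
def natVecToReal {n : ℕ} (a : Fin n → ℕ) : Fin n → ℝ := fun i => (a i : ℝ)

/-- `F` is a face of the cone `C`. -/
def IsFaceOfCone {d : ℕ} (C F : Set (Fin d → ℝ)) : Prop :=
  F ⊆ C ∧ (∀ r : ℝ, 0 ≤ r → ∀ y ∈ F, r • y ∈ F) ∧
    ∀ x ∈ C, ∀ y ∈ C, (x + y ∈ F ↔ x ∈ F ∧ y ∈ F)

/-- An extremal ray of `C` is a one-dimensional face of `C`. -/
def IsExtremalRayOfCone {d : ℕ} (C l : Set (Fin d → ℝ)) : Prop :=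
  IsFaceOfCone C l ∧ Module.finrank ℝ (Submodule.span ℝ l) = 1

open scoped NNReal

section Algebra

/-- A fraction `a / b` multiplied into `R` by an ideal containing a regular sequence of length
at least two already lies in `R`. -/
theorem IsRegularSeq.dvd_of_forall_dvd_mul {R : Type*} [CommRing R] [IsDomain R] {l : List R}
    (hl : IsRegularSeq l) (hlen : 2 ≤ l.length) {a b : R} (hb : b ≠ 0)
    (h : ∀ f ∈ l, b ∣ f * a) : b ∣ a := by
  obtain _ | ⟨f₁, _ | ⟨f₂, l⟩⟩ := l
  · simp at hlen
  · simp at hlen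
  obtain ⟨h₁, e₁⟩ := h f₁ (by simp)
  obtain ⟨h₂, e₂⟩ := h f₂ (by simp)
  have hcomm : h₁ * f₂ = h₂ * f₁ := by
    apply mul_left_cancel₀ hb
    linear_combination (-f₂) * e₁ + f₁ * e₂
  have hf₁ : f₁ ≠ 0 := by
    rintro rfl
    have := hl.1 0 (by simp) 1 (by simp)
    simp at this
  have hmem := hl.1 1 (by simp) h₁
  simp only [List.getElem_cons_succ, List.getElem_cons_zero, List.take_succ_cons, List.take_zero,
    List.mem_cons, List.not_mem_nil, or_false, Set.ofPred_eq_eq_singleton,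
    Ideal.mem_span_singleton] at hmem
  obtain ⟨r, rfl⟩ := hmem ⟨h₂, by rw [hcomm, mul_comm]⟩
  exact ⟨r, mul_left_cancel₀ hf₁ (by rw [e₁]; ring)⟩

/-- A monoid algebra that is a domain has Krull dimension at least two as soon as its monoid has
two distinct elements of the same positive degree. -/
theorem AddMonoidAlgebra.two_le_ringKrullDim {k M : Type*} [Field k] [AddCommMonoid M]
    [IsDomain (AddMonoidAlgebra k M)] (d : M →+ ℕ) {g h : M} (hgh : g ≠ h) (hd : d g = d h)
    (hg : d g ≠ 0) : 2 ≤ ringKrullDim (AddMonoidAlgebra k M) := by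
  let φ : AddMonoidAlgebra k M →ₐ[k] Polynomial k :=
    AddMonoidAlgebra.lift k (Polynomial k) M
      { toFun := fun s => Polynomial.X ^ d s.toAdd
        map_one' := by simp
        map_mul' := fun s t => by simp [pow_add] }
  have hφ : ∀ s : M, φ (AddMonoidAlgebra.single s 1) = Polynomial.X ^ d s := fun s => by
    simp [φ, AddMonoidAlgebra.lift_single]
  let ψ : AddMonoidAlgebra k M →+* k := (Polynomial.evalRingHom 0).comp φ.toRingHom
  let p₀ : PrimeSpectrum (AddMonoidAlgebra k M) := ⟨⊥, Ideal.isPrime_bot⟩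
  let p₁ : PrimeSpectrum (AddMonoidAlgebra k M) := ⟨RingHom.ker φ, RingHom.ker_isPrime _⟩
  let p₂ : PrimeSpectrum (AddMonoidAlgebra k M) := ⟨RingHom.ker ψ, RingHom.ker_isPrime _⟩
  have h₀₁ : p₀ < p₁ := by
    rw [← PrimeSpectrum.asIdeal_lt_asIdeal]
    refine bot_lt_iff_ne_bot.2 fun hbot => hgh ?_
    have hmem : AddMonoidAlgebra.single g (1 : k) - AddMonoidAlgebra.single h 1 ∈
        RingHom.ker φ := by
      rw [RingHom.mem_ker, map_sub, hφ, hφ, hd, sub_self]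
    rw [show RingHom.ker φ = ⊥ from hbot, Ideal.mem_bot, sub_eq_zero] at hmem
    exact AddMonoidAlgebra.of_injective (R := k) hmem
  have h₁₂ : p₁ < p₂ := by
    rw [← PrimeSpectrum.asIdeal_lt_asIdeal]
    refine SetLike.lt_iff_le_and_exists.2 ⟨fun x hx => ?_, AddMonoidAlgebra.single g 1, ?_, ?_⟩
    · have : φ x = 0 := hx
      simp [p₂, ψ, RingHom.mem_ker, this]
    · simp [p₂, ψ, RingHom.mem_ker, hφ, hg]
    · simp [p₁, RingHom.mem_ker, hφ]
  exact Order.le_krullDim_iff.2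
    ⟨{ length := 2
       toFun := ![p₀, p₁, p₂]
       step := fun i => by fin_cases i; exacts [h₀₁, h₁₂] }, rfl⟩

instance AddSubmonoid.isDomain_addMonoidAlgebra {k : Type*} [Field k] {n : ℕ}
    (S : AddSubmonoid (Fin n → ℕ)) : IsDomain (AddMonoidAlgebra k S) :=
  haveI : UniqueSums S :=
    UniqueSums.of_injective_addHom (S.subtype : S →ₙ+ (Fin n → ℕ)) Subtype.val_injective
      inferInstance
  haveI : NoZeroDivisors (AddMonoidAlgebra k S) := inferInstance
  NoZeroDivisors.to_isDomain _

/-- A monomial quotient `x ^ (p - q)` multiplied into `k[S]` by all monomials of positive degree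
lies in `k[S]`, when `k[S]` has depth at least two. -/
theorem exists_add_eq_of_isCMWrt {k : Type*} [Field k] {n : ℕ} {S : AddSubmonoid (Fin n → ℕ)}
    (hCM : IsCMWrt (sgMaxIdeal k S)) (hdim : 2 ≤ ringKrullDim (AddMonoidAlgebra k S))
    (p q : S) (h : ∀ s : S, s ≠ 0 → ∃ t, s + p = q + t) : ∃ t, p = q + t := by
  obtain ⟨l, hlm, hreg, hlen⟩ := hCM
  rw [← hlen] at hdim
  have hsub : ∀ f ∈ sgMaxIdeal k S,
      AddMonoidAlgebra.single q (1 : k) ∣ f * AddMonoidAlgebra.single p 1 := by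
    intro f hf
    induction hf using Submodule.span_induction with
    | mem x hx =>
      obtain ⟨s, hs, rfl⟩ := hx
      obtain ⟨t, ht⟩ := h s hs
      exact ⟨AddMonoidAlgebra.single t 1, by simp [AddMonoidAlgebra.single_mul_single, ht]⟩
    | zero => simp
    | add x y _ _ hx hy => rw [add_mul]; exact dvd_add hx hy
    | smul a x _ hx => rw [smul_eq_mul, mul_assoc]; exact hx.mul_left a
  obtain ⟨r, hr⟩ := hreg.dvd_of_forall_dvd_mul (by exact_mod_cast hdim)
    (a := AddMonoidAlgebra.single p (1 : k)) (b := AddMonoidAlgebra.single q (1 : k))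
    (by simp) fun f hf => hsub f (hlm f hf)
  have hmem : AddMonoidAlgebra.single p (1 : k) ∈
      Ideal.span (AddMonoidAlgebra.of' k S '' {q}) := by
    rw [hr, Set.image_singleton]
    exact Ideal.mul_mem_right _ _ (Ideal.subset_span rfl)
  obtain ⟨_, rfl, t, ht⟩ := AddMonoidAlgebra.mem_ideal_span_of'_image.1 hmem p (by simp)
  exact ⟨t, by rw [ht, add_comm]⟩

end Algebra

section Cone

variable {n : ℕ}

theorem natVecToReal_injective : Function.Injective (natVecToReal (n := n)) := fun _ _ h =>
  funext fun i => Nat.cast_injective (R := ℝ) (congrFun h i)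

/-- Natural vectors in the real cone over `E` have a positive multiple in the monoid generated
by `E`. -/
theorem exists_nsmul_mem_closure {E : Finset (Fin n → ℕ)} {g : Fin n → ℕ}
    (hg : natVecToReal g ∈ Submodule.span ℝ≥0 (natVecToReal '' (E : Set (Fin n → ℕ)))) :
    ∃ N : ℕ, 0 < N ∧ N • g ∈ AddSubmonoid.closure (E : Set (Fin n → ℕ)) := by
  obtain ⟨c, hc⟩ := (Submodule.mem_span_image_finset_iff_exists_fun ℝ≥0).1 hg
  have hcoord : ∀ i, ∑ e : E, (c e : ℝ) * (e.1 i : ℝ) = g i := fun i => by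
    simpa [natVecToReal, NNReal.smul_def] using congrFun hc i
  let fl : ℕ → E → ℕ := fun N e => ⌊(N : ℝ) * c e⌋₊
  -- the integral part of `N • g` is at distance at most `∑ e` from `N • g`
  have hle : ∀ N i, ∑ e, fl N e * e.1 i ≤ N * g i := fun N i => by
    have : ((∑ e, fl N e * e.1 i : ℕ) : ℝ) ≤ ((N * g i : ℕ) : ℝ) := by
      push_cast
      rw [← hcoord i, Finset.mul_sum]
      refine Finset.sum_le_sum fun e _ => ?_
      rw [← mul_assoc]
      exact mul_le_mul_of_nonneg_right (Nat.floor_le (by positivity)) (by positivity)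
    exact_mod_cast this
  have hge : ∀ N i, N * g i ≤ ∑ e, fl N e * e.1 i + ∑ e : E, e.1 i := fun N i => by
    have : ((N * g i : ℕ) : ℝ) ≤ ((∑ e, fl N e * e.1 i + ∑ e : E, e.1 i : ℕ) : ℝ) := by
      push_cast
      rw [← hcoord i, Finset.mul_sum, ← Finset.sum_add_distrib]
      refine Finset.sum_le_sum fun e _ => ?_
      rw [← mul_assoc, ← add_one_mul]
      exact mul_le_mul_of_nonneg_right (Nat.lt_floor_add_one _).le (by positivity)
    exact_mod_cast this
  let rem : ℕ → ∀ i : Fin n, Fin (∑ e : E, e.1 i + 1) := fun N i =>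
    ⟨N * g i - ∑ e, fl N e * e.1 i, by have := hge N i; omega⟩
  obtain ⟨A, B, hAB, hrem⟩ : ∃ A B, A < B ∧ rem A = rem B := by
    obtain ⟨A, B, hne, h⟩ := Finite.exists_ne_map_eq_of_infinite rem
    rcases hne.lt_or_gt with hlt | hlt
    exacts [⟨A, B, hlt, h⟩, ⟨B, A, hlt, h.symm⟩]
  have hmono : ∀ e, fl A e ≤ fl B e := fun e =>
    Nat.floor_le_floor (mul_le_mul_of_nonneg_right (by exact_mod_cast hAB.le) (by positivity))
  have key : (B - A) • g = ∑ e : E, (fl B e - fl A e) • e.1 := by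
    ext i
    have h₁ : A * g i - ∑ e, fl A e * e.1 i = B * g i - ∑ e, fl B e * e.1 i :=
      congrArg Fin.val (congrFun hrem i)
    have h₂ := hle A i
    have h₃ := hle B i
    have h₄ : ∑ e : E, (fl B e - fl A e) * e.1 i + ∑ e, fl A e * e.1 i =
        ∑ e, fl B e * e.1 i := by
      rw [← Finset.sum_add_distrib]
      exact Finset.sum_congr rfl fun e _ => by rw [← add_mul, Nat.sub_add_cancel (hmono e)]
    simp only [Pi.smul_apply, smul_eq_mul, Finset.sum_apply, Nat.sub_mul B A]
    omega
  refine ⟨B - A, Nat.sub_pos_of_lt hAB, key ▸ ?_⟩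
  exact AddSubmonoid.sum_mem _ fun e _ =>
    AddSubmonoid.nsmul_mem _ (AddSubmonoid.subset_closure e.2) _

theorem nonneg_of_mem_span_natVecToReal {s : Set (Fin n → ℕ)} {x : Fin n → ℝ}
    (hx : x ∈ Submodule.span ℝ≥0 (natVecToReal '' s)) : 0 ≤ x := by
  induction hx using Submodule.span_induction with
  | mem x hx =>
    obtain ⟨a, -, rfl⟩ := hx
    exact fun i => Nat.cast_nonneg (a i)
  | zero => exact le_rfl
  | add x y _ _ hx hy => exact add_nonneg hx hy
  | smul a x _ hx => exact smul_nonneg a.2 hx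

/-- A nonzero vector outside the cone over `s` spans an extremal ray of the cone over
`insert a s`. -/
theorem isExtremalRayOfCone_of_notMem {C : Set (Fin n → ℝ)} {s : Set (Fin n → ℕ)}
    {a : Fin n → ℕ} (ha : a ≠ 0)
    (hC : ∀ x, x ∈ C ↔ x ∈ Submodule.span ℝ≥0 (natVecToReal '' insert a s))
    (has : natVecToReal a ∉ Submodule.span ℝ≥0 (natVecToReal '' s)) :
    IsExtremalRayOfCone C {x | ∃ r : ℝ, 0 ≤ r ∧ x = r • natVecToReal a} := by
  have ha' : natVecToReal a ≠ 0 := fun h => ha (natVecToReal_injective (by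
    rw [h]; ext; simp [natVecToReal]))
  have hdecomp : ∀ x ∈ C, ∃ r : ℝ≥0, ∃ z ∈ Submodule.span ℝ≥0 (natVecToReal '' s),
      x = r • natVecToReal a + z := fun x hx => by
    rw [hC, Set.image_insert_eq] at hx
    exact Submodule.mem_span_insert.1 hx
  refine ⟨⟨?_, ?_, fun x hx y hy => ⟨?_, ?_⟩⟩, ?_⟩
  · rintro _ ⟨r, hr, rfl⟩
    rw [hC]
    exact Submodule.smul_mem _ (⟨r, hr⟩ : ℝ≥0)
      (Submodule.subset_span ⟨a, Set.mem_insert _ _, rfl⟩)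
  · rintro t ht _ ⟨r, hr, rfl⟩
    exact ⟨t * r, mul_nonneg ht hr, smul_smul _ _ _⟩
  · rintro ⟨r, -, hr⟩
    obtain ⟨p, x', hx', rfl⟩ := hdecomp x hx
    obtain ⟨q, y', hy', rfl⟩ := hdecomp y hy
    have hsum : x' + y' = (r - p - q) • natVecToReal a := by
      simp only [NNReal.smul_def] at hr
      rw [sub_smul, sub_smul, ← hr]
      abel
    have hx₀ := nonneg_of_mem_span_natVecToReal hx'
    have hy₀ := nonneg_of_mem_span_natVecToReal hy'
    rcases lt_or_ge 0 ((r : ℝ) - p - q) with hpos | hneg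
    · refine absurd ?_ has
      have hinv : natVecToReal a = (⟨_, (inv_pos.2 hpos).le⟩ : ℝ≥0) • (x' + y') := by
        change _ = (r - p - q)⁻¹ • (x' + y')
        rw [hsum, smul_smul, inv_mul_cancel₀ hpos.ne', one_smul]
      rw [hinv]
      exact Submodule.smul_mem _ _ (Submodule.add_mem _ hx' hy')
    · have hle : x' + y' ≤ 0 := by
        rw [hsum]
        exact smul_nonpos_of_nonpos_of_nonneg hneg fun i => Nat.cast_nonneg (a i)
      have hx'' : x' = 0 := le_antisymm ((le_add_of_nonneg_right hy₀).trans hle) hx₀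
      have hy'' : y' = 0 := le_antisymm ((le_add_of_nonneg_left hx₀).trans hle) hy₀
      exact ⟨⟨p, p.2, by simp [hx'', NNReal.smul_def]⟩, ⟨q, q.2, by simp [hy'', NNReal.smul_def]⟩⟩
  · rintro ⟨⟨p, hp, rfl⟩, ⟨q, hq, rfl⟩⟩
    exact ⟨p + q, add_nonneg hp hq, (add_smul _ _ _).symm⟩
  · have hspan : Submodule.span ℝ {x | ∃ r : ℝ, 0 ≤ r ∧ x = r • natVecToReal a} =
        Submodule.span ℝ {natVecToReal a} := by
      apply le_antisymm <;> rw [Submodule.span_le]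
      · rintro _ ⟨r, -, rfl⟩
        exact Submodule.smul_mem _ _ (Submodule.mem_span_singleton_self _)
      · rintro _ rfl
        exact Submodule.subset_span ⟨1, zero_le_one, (one_smul _ _).symm⟩
    rw [hspan]
    exact finrank_span_singleton ha'

/-- Every finite set `G` of nonzero natural vectors contains a set of extremal ray generators of
its cone whose monoid contains a positive multiple of each element of `G`. -/
theorem exists_extremal_subset {C : Set (Fin n → ℝ)} {G : Finset (Fin n → ℕ)} (hG : 0 ∉ G)
    (hC : ∀ x, x ∈ C ↔ x ∈ Submodule.span ℝ≥0 (natVecToReal '' (G : Set (Fin n → ℕ)))) :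
    ∃ E ⊆ G,
      (∀ a ∈ E, IsExtremalRayOfCone C {x | ∃ r : ℝ, 0 ≤ r ∧ x = r • natVecToReal a}) ∧
      ∀ g ∈ G, ∃ N : ℕ, 0 < N ∧ N • g ∈ AddSubmonoid.closure (E : Set (Fin n → ℕ)) := by
  obtain ⟨E, ⟨hEG, hE⟩, hmin⟩ := exists_minimal_of_wellFoundedLT
    (fun E : Finset (Fin n → ℕ) => E ⊆ G ∧
      Submodule.span ℝ≥0 (natVecToReal '' (E : Set (Fin n → ℕ))) =
        Submodule.span ℝ≥0 (natVecToReal '' (G : Set (Fin n → ℕ)))) ⟨G, subset_rfl, rfl⟩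
  refine ⟨E, hEG, fun a ha => ?_, fun g hg => exists_nsmul_mem_closure ?_⟩
  · have hins : insert a ((E.erase a : Finset _) : Set (Fin n → ℕ)) = E := by
      rw [← Finset.coe_insert, Finset.insert_erase ha]
    refine isExtremalRayOfCone_of_notMem (s := (E.erase a : Finset _))
      (fun h => hG (h ▸ hEG ha)) (fun x => by rw [hins, hE, hC]) fun hmem => ?_
    refine Finset.notMem_erase a E (hmin ⟨(E.erase_subset a).trans hEG, ?_⟩ (E.erase_subset a) ha)
    rw [← hE, ← hins, Set.image_insert_eq, Submodule.span_insert_eq_span hmem]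
  · rw [hE]
    exact Submodule.subset_span ⟨g, hg, rfl⟩

end Cone

/-- If an upward closed predicate `Q` on a monoid fails at `0` and eventually holds along every
multiple of each element of `G`, then some element violates `Q` while all its translates by
elements of `G` satisfy `Q`. -/
theorem exists_maximal_not {M : Type*} [AddCommMonoid M] {S : AddSubmonoid M} {Q : M → Prop}
    (hQ : ∀ s t, t ∈ S → Q s → Q (s + t)) (h0 : ¬ Q 0) (G : Finset M) (hGS : ∀ g ∈ G, g ∈ S)
    (hN : ∀ g ∈ G, ∃ N : ℕ, Q (N • g)) : ∃ s ∈ S, ¬ Q s ∧ ∀ g ∈ G, Q (s + g) := by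
  classical
  induction G using Finset.induction_on with
  | empty => exact ⟨0, S.zero_mem, h0, by simp⟩
  | insert g G _ ih =>
    rw [Finset.forall_mem_insert] at hGS hN
    obtain ⟨s, hs, hsQ, hsG⟩ := ih hGS.2 hN.2
    have hex : ∃ N : ℕ, Q (s + N • g) := hN.1.imp fun N h => by
      rw [add_comm]; exact hQ _ _ hs h
    obtain ⟨m, hm⟩ : ∃ m, Nat.find hex = m + 1 := Nat.exists_eq_succ_of_ne_zero fun h => hsQ (by
      simpa [h] using Nat.find_spec hex)
    refine ⟨s + m • g, S.add_mem hs (S.nsmul_mem hGS.1 _), Nat.find_min hex (by omega), ?_⟩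
    rw [Finset.forall_mem_insert]
    refine ⟨?_, fun g' hg' => ?_⟩
    · have := Nat.find_spec hex
      rwa [hm, succ_nsmul, ← add_assoc] at this
    · rw [add_right_comm]
      exact hQ _ _ (S.nsmul_mem hGS.1 _) (hsG g' hg')

theorem AddSubmonoid.exists_eq_add_of_mem_closure {M : Type*} [AddCommMonoid M] {E : Set M}
    {x : M} (hx : x ∈ AddSubmonoid.closure E) :
    x = 0 ∨ ∃ e ∈ E, ∃ y ∈ AddSubmonoid.closure E, x = e + y := by
  induction hx using AddSubmonoid.closure_induction with
  | mem x hx => exact Or.inr ⟨x, hx, 0, zero_mem _, (add_zero x).symm⟩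
  | zero => exact Or.inl rfl
  | add x y _ hy ihx ihy =>
    rcases ihx with rfl | ⟨e, he, z, hz, rfl⟩
    · rwa [zero_add]
    · exact Or.inr ⟨e, he, z + y, add_mem hz hy, add_assoc _ _ _⟩

/-- In a Cohen-Macaulay homogeneous semigroup, a difference `p - q` of nonnegative degree
such that `p - q + e` lies in the semigroup for all generators `e` of extremal rays lies in the
semigroup. -/
theorem exists_add_eq_of_forall_extremal {k : Type*} [Field k] {n : ℕ}
    {S : AddSubmonoid (Fin n → ℕ)} {G E : Finset (Fin n → ℕ)}
    (hGgen : AddSubmonoid.closure ↑G = S) (hEG : E ⊆ G)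
    (hE : ∀ g ∈ G, ∃ N : ℕ, 0 < N ∧ N • g ∈ AddSubmonoid.closure (E : Set (Fin n → ℕ)))
    (d : S →+ ℕ) (hd : ∀ g : S, g.1 ∈ G → d g = 1) (hCM : IsCMWrt (sgMaxIdeal k S))
    {p q : S} (hpq : d q ≤ d p) (h : ∀ e ∈ E, ∃ t ∈ S, p + e = q + t) :
    ∃ t : S, p = q + t := by
  have hGS : ∀ g ∈ G, g ∈ S := fun g hg => hGgen ▸ AddSubmonoid.subset_closure hg
  have hG0 : ∀ g ∈ G, g ≠ 0 := by
    rintro g hg rfl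
    simpa using hd 0 hg
  by_cases hsub : ∀ g ∈ G, ∀ g' ∈ G, g = g'
  · have hmul : ∀ s : S, ∀ g ∈ G, s.1 = d s • g := by
      intro s g hg
      obtain ⟨s, hs⟩ := s
      have hs' : s ∈ AddSubmonoid.closure {g} :=
        AddSubmonoid.closure_mono (fun x hx => hsub x hx g hg) (hGgen ▸ hs)
      obtain ⟨m, rfl⟩ := AddSubmonoid.mem_closure_singleton.1 hs'
      have : (⟨m • g, hs⟩ : S) = m • ⟨g, hGS g hg⟩ := rfl
      rw [this, map_nsmul, hd _ hg]
      simp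
    rcases G.eq_empty_or_nonempty with rfl | ⟨g, hg⟩
    · have hzero : ∀ s : S, s = 0 := fun s => by
        obtain ⟨s, hs⟩ := s
        rw [← hGgen] at hs
        simpa using hs
      exact ⟨0, by rw [hzero p, hzero q, add_zero]⟩
    · refine ⟨(d p - d q) • ⟨g, hGS g hg⟩, Subtype.ext ?_⟩
      rw [AddSubmonoid.coe_add, AddSubmonoidClass.coe_nsmul, hmul p g hg, hmul q g hg, ← add_nsmul,
        Nat.add_sub_cancel' hpq]
  · push Not at hsub
    obtain ⟨g, hg, g', hg', hne⟩ := hsub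
    have hdim : 2 ≤ ringKrullDim (AddMonoidAlgebra k S) :=
      AddMonoidAlgebra.two_le_ringKrullDim d (g := ⟨g, hGS g hg⟩) (h := ⟨g', hGS g' hg'⟩)
        (fun h => hne (congrArg Subtype.val h)) (by rw [hd _ hg, hd _ hg'])
        (by rw [hd _ hg]; exact one_ne_zero)
    let Q : (Fin n → ℕ) → Prop := fun s => ∃ t ∈ S, p + s = q + t
    have hQ : ∀ s t, t ∈ S → Q s → Q (s + t) := by
      rintro s t ht ⟨r, hr, hsr⟩
      exact ⟨r + t, S.add_mem hr ht, by rw [← add_assoc, hsr, add_assoc]⟩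
    by_contra hnot
    have h0 : ¬ Q 0 := by
      rintro ⟨t, ht, hpt⟩
      exact hnot ⟨⟨t, ht⟩, Subtype.ext (by simpa using hpt)⟩
    have hES : AddSubmonoid.closure (E : Set (Fin n → ℕ)) ≤ S :=
      hGgen ▸ AddSubmonoid.closure_mono (Finset.coe_subset.2 hEG)
    obtain ⟨s, hs, hsQ, hsG⟩ := exists_maximal_not hQ h0 G hGS fun g hg => by
      obtain ⟨N, hN, hmem⟩ := hE g hg
      refine ⟨N, ?_⟩
      rcases AddSubmonoid.exists_eq_add_of_mem_closure hmem with hz | ⟨e, he, y, hy, hey⟩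
      · exact absurd hz (smul_ne_zero hN.ne' (hG0 g hg))
      · rw [hey]
        exact hQ _ _ (hES hy) (h e he)
    obtain ⟨t, ht⟩ := exists_add_eq_of_isCMWrt hCM hdim (p + ⟨s, hs⟩) q fun s' hs' => by
      have hmem : s'.1 ∈ AddSubmonoid.closure (G : Set (Fin n → ℕ)) := hGgen ▸ s'.2
      rcases AddSubmonoid.exists_eq_add_of_mem_closure hmem with hz | ⟨g, hg, y, hy, hgy⟩
      · exact absurd (Subtype.ext hz) hs'
      · obtain ⟨t, ht, hpt⟩ := hQ _ y (hGgen ▸ hy) (hsG g hg)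
        refine ⟨⟨t, ht⟩, Subtype.ext ?_⟩
        rw [AddSubmonoid.coe_add, AddSubmonoid.coe_add, AddSubmonoid.coe_add, ← hpt, hgy]
        simp only
        abel
    exact hsQ ⟨t, t.2, congrArg Subtype.val ht⟩

/-- Theorem 4.3: with `S`, `G`, `V` as in the nearly Gorenstein
set-up, if `|V_min| = 1` and `|V| ≥ 2`, then some minimal generator `a ∈ G`
spanning an extremal ray of `ℝ≥0·S` cannot be written as `v + u` with
`v ∈ V_min` and `u ∈ S - V`. -/
theorem extremal_ray_not_in_trace
    (k : Type*) [Field k] {n : ℕ} (S : AddSubmonoid (Fin n → ℕ))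
    (G : Finset (Fin n → ℕ)) (hGgen : AddSubmonoid.closure ↑G = S)
    (hGmin : ∀ g ∈ G, g ∉ AddSubmonoid.closure ↑(G.erase g))
    (δ : (Fin n → ℕ) → ℕ) (hδadd : ∀ a ∈ S, ∀ b ∈ S, δ (a + b) = δ a + δ b)
    (hδ0 : δ 0 = 0) (hδG : ∀ g ∈ G, δ g = 1)
    (hCM : IsCMWrt (sgMaxIdeal k S))
    (V : Finset (Fin n → ℕ)) (hVS : ∀ v ∈ V, v ∈ S)
    (I_R : Ideal (AddMonoidAlgebra k ↥S))
    (hIR : I_R = Ideal.span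
      {x | ∃ v, ∃ hv : v ∈ V, x = AddMonoidAlgebra.single (⟨v, hVS v hv⟩ : ↥S) (1 : k)})
    (hVmin : ∀ v, ∀ hv : v ∈ V,
      AddMonoidAlgebra.single (⟨v, hVS v hv⟩ : ↥S) (1 : k) ∉ Ideal.span
        {x | ∃ w, ∃ hw : w ∈ V.erase v,
          x = AddMonoidAlgebra.single (⟨w, hVS w (Finset.mem_of_mem_erase hw)⟩ : ↥S) (1 : k)})
    -- the set of minimal-degree elements of `V`:
    (Vmin : Finset (Fin n → ℕ))
    (hVminDef : ∀ v, v ∈ Vmin ↔ v ∈ V ∧ ∀ w ∈ V, δ v ≤ δ w)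
    (hVmin1 : Vmin.card = 1) (hV2 : 2 ≤ V.card)
    -- the cone `ℝ≥0 S`:
    (C : Set (Fin n → ℝ))
    (hC : C = {x | ∃ c : (Fin n → ℕ) → ℝ, (∀ g, 0 ≤ c g) ∧
      x = ∑ g ∈ G, c g • natVecToReal g}) :
    ∃ a ∈ G,
      IsExtremalRayOfCone C {x | ∃ r : ℝ, 0 ≤ r ∧ x = r • natVecToReal a} ∧
      ¬ ∃ v ∈ Vmin, ∃ u : Fin n → ℤ, MemSminusV S V u ∧
          natVecToInt a = u + natVecToInt v := by
  have hGS : ∀ g ∈ G, g ∈ S := fun g hg => hGgen ▸ AddSubmonoid.subset_closure hg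
  have hG0 : (0 : Fin n → ℕ) ∉ G := fun h => by simpa [hδ0] using hδG 0 h
  let d : S →+ ℕ :=
    { toFun := fun s => δ s
      map_zero' := hδ0
      map_add' := fun s t => hδadd s s.2 t t.2 }
  have hCspan : ∀ x, x ∈ C ↔
      x ∈ Submodule.span ℝ≥0 (natVecToReal '' (G : Set (Fin n → ℕ))) := by
    intro x
    rw [hC]
    constructor
    · rintro ⟨c, hc, rfl⟩
      exact Submodule.sum_mem _ fun g hg =>
        Submodule.smul_mem _ (⟨c g, hc g⟩ : ℝ≥0) (Submodule.subset_span ⟨g, hg, rfl⟩)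
    · intro hx
      obtain ⟨c, rfl⟩ := (Submodule.mem_span_image_finset_iff_exists_fun ℝ≥0).1 hx
      refine ⟨fun g => if hg : g ∈ G then c ⟨g, hg⟩ else 0, fun g => ?_, ?_⟩
      · dsimp only
        split_ifs
        exacts [NNReal.coe_nonneg _, le_rfl]
      · rw [← Finset.sum_coe_sort G]
        exact Finset.sum_congr rfl fun g _ => by simp [NNReal.smul_def]
  obtain ⟨E, hEG, hEray, hEmul⟩ := exists_extremal_subset hG0 hCspan
  by_contra! hall
  obtain ⟨v₀, hv₀⟩ := Finset.card_eq_one.1 hVmin1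
  obtain ⟨hv₀V, hv₀min⟩ := (hVminDef v₀).1 (by simp [hv₀])
  obtain ⟨v₁, hv₁V, hne⟩ := Finset.exists_mem_ne hV2 v₀
  obtain ⟨t, ht⟩ := exists_add_eq_of_forall_extremal hGgen hEG hEmul d
    (fun g hg => hδG g hg) hCM (p := ⟨v₁, hVS v₁ hv₁V⟩) (q := ⟨v₀, hVS v₀ hv₀V⟩)
    (hv₀min v₁ hv₁V) fun e he => by
      obtain ⟨v, hv, u, ⟨-, hu⟩, heq⟩ := hall e (hEG he) (hEray e he)
      obtain rfl : v = v₀ := by simpa [hv₀] using hv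
      obtain ⟨s, hs, hus⟩ := hu v₁ hv₁V
      refine ⟨s, hs, funext fun i => ?_⟩
      have h₁ := congrFun heq i
      have h₂ := congrFun hus i
      simp only [natVecToInt, Pi.add_apply] at h₁ h₂ ⊢
      omega
  refine hVmin v₁ hv₁V ?_
  rw [ht, show AddMonoidAlgebra.single (⟨v₀, hVS v₀ hv₀V⟩ + t) (1 : k) =
      AddMonoidAlgebra.single ⟨v₀, hVS v₀ hv₀V⟩ 1 * AddMonoidAlgebra.single t 1 by
    rw [AddMonoidAlgebra.single_mul_single, one_mul]]
  exact Ideal.mul_mem_right _ _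
    (Ideal.subset_span ⟨v₀, Finset.mem_erase.2 ⟨hne.symm, hv₀V⟩, rfl⟩)

end
end
end

section
/- Let $n \geq 2$ and $R = \Bbbk[x_1, \dots, x_n]/(x_i x_j : i \neq j)$ be the Stanley-Reisner ring of $n$ points. Then $R$ is nearly Gorenstein and level. -/
noncomputable section

open MvPolynomial Classical
/-- The Stanley-Reisner ideal of `n` disjoint points. -/
def pointsIdeal (𝕜 : Type*) [Field 𝕜] (n : ℕ) : Ideal (MvPolynomial (Fin n) 𝕜) :=
  Ideal.span {x | ∃ i j : Fin n, i ≠ j ∧ x = X i * X j}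

/-- Membership in the ideal of the points: every monomial involves two distinct variables. -/
theorem mem_pointsIdeal_iff {𝕜 : Type*} [Field 𝕜] {n : ℕ} {f : MvPolynomial (Fin n) 𝕜} :
    f ∈ pointsIdeal 𝕜 n ↔ ∀ m ∈ f.support, ∃ i j : Fin n, i ≠ j ∧ m i ≠ 0 ∧ m j ≠ 0 := by
  have hset : {x : MvPolynomial (Fin n) 𝕜 | ∃ i j : Fin n, i ≠ j ∧ x = X i * X j} =
      (fun s => monomial s (1 : 𝕜)) ''
        {s : Fin n →₀ ℕ | ∃ i j, i ≠ j ∧ s = Finsupp.single i 1 + Finsupp.single j 1} := by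
    ext x
    constructor
    · rintro ⟨i, j, hij, rfl⟩
      exact ⟨_, ⟨i, j, hij, rfl⟩, by simp [X, monomial_mul]⟩
    · rintro ⟨_, ⟨i, j, hij, rfl⟩, rfl⟩
      exact ⟨i, j, hij, by simp [X, monomial_mul]⟩
  rw [pointsIdeal, hset, mem_ideal_span_monomial_image]
  refine forall₂_congr fun m _ => ⟨?_, ?_⟩
  · rintro ⟨_, ⟨i, j, hij, rfl⟩, hle⟩
    have hi := hle i
    have hj := hle j
    simp only [Finsupp.add_apply, Finsupp.single_eq_same] at hi hj
    exact ⟨i, j, hij, by omega, by omega⟩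
  · rintro ⟨i, j, hij, hi, hj⟩
    refine ⟨_, ⟨i, j, hij, rfl⟩, fun k => ?_⟩
    simp only [Finsupp.add_apply, Finsupp.single_apply]
    split_ifs <;> grind

theorem mk_X_mul_X_of_ne {𝕜 : Type*} [Field 𝕜] {n : ℕ} {i j : Fin n} (hij : i ≠ j) :
    Ideal.Quotient.mk (pointsIdeal 𝕜 n) (X i) * Ideal.Quotient.mk (pointsIdeal 𝕜 n) (X j) = 0 := by
  rw [← map_mul, Ideal.Quotient.eq_zero_iff_mem]
  exact Ideal.subset_span ⟨i, j, hij, rfl⟩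

/-- The sum of the variables is a non-zerodivisor modulo the ideal of the points. -/
theorem mk_sum_X_mem_nonZeroDivisors (𝕜 : Type*) [Field 𝕜] {n : ℕ} (hn : 0 < n) :
    Ideal.Quotient.mk (pointsIdeal 𝕜 n) (∑ j, X j) ∈
      nonZeroDivisors (MvPolynomial (Fin n) 𝕜 ⧸ pointsIdeal 𝕜 n) := by
  rw [mem_nonZeroDivisors_iff_right]
  intro r hr
  obtain ⟨f, rfl⟩ := Ideal.Quotient.mk_surjective r
  rw [← map_mul, Ideal.Quotient.eq_zero_iff_mem, mem_pointsIdeal_iff] at hr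
  rw [Ideal.Quotient.eq_zero_iff_mem, mem_pointsIdeal_iff]
  intro m hm
  by_contra hpure
  obtain ⟨i, hi⟩ : ∃ i : Fin n, ∀ k, k ≠ i → m k = 0 := by
    by_cases h0 : m = 0
    · exact ⟨⟨0, hn⟩, by simp [h0]⟩
    · obtain ⟨i, hi⟩ := Finsupp.ne_iff.mp h0
      exact ⟨i, fun k hk => by_contra fun hmk => hpure ⟨k, i, hk, hmk, hi⟩⟩
  have hcoeff : coeff (m + Finsupp.single i 1) (f * ∑ j, X j) = coeff m f := by
    rw [Finset.mul_sum, coeff_sum, Finset.sum_eq_single i, coeff_mul_X]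
    · intro j _ hj
      rw [coeff_mul_X', if_neg]
      simp [hi j hj, hj.symm]
    · simp
  obtain ⟨a, b, hab, ha, hb⟩ := hr (m + Finsupp.single i 1) (by
    rw [mem_support_iff, hcoeff]
    exact mem_support_iff.mp hm)
  have hoff : ∀ k : Fin n, (m + Finsupp.single i 1 : Fin n →₀ ℕ) k ≠ 0 → k = i := by
    intro k hk
    by_contra hki
    exact hk (by simp [hi k hki, Ne.symm hki])
  exact hab ((hoff a ha).trans (hoff b hb).symm)

/-- In the total fraction ring, each point has an idempotent that is the identity on its own
variable and annihilates the others. -/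
theorem exists_point_idempotent (𝕜 : Type*) [Field 𝕜] {n : ℕ} (i : Fin n) :
    ∃ e : FractionRing (MvPolynomial (Fin n) 𝕜 ⧸ pointsIdeal 𝕜 n), ∀ j : Fin n,
      e * algebraMap _ _ (Ideal.Quotient.mk (pointsIdeal 𝕜 n) (X j)) =
        algebraMap _ _ (if j = i then Ideal.Quotient.mk (pointsIdeal 𝕜 n) (X i) else 0) := by
  let s : nonZeroDivisors (MvPolynomial (Fin n) 𝕜 ⧸ pointsIdeal 𝕜 n) :=
    ⟨_, mk_sum_X_mem_nonZeroDivisors 𝕜 i.pos⟩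
  let e := IsLocalization.mk' (FractionRing (MvPolynomial (Fin n) 𝕜 ⧸ pointsIdeal 𝕜 n))
    (Ideal.Quotient.mk (pointsIdeal 𝕜 n) (X i)) s
  have hes : e * algebraMap _ _ (s : MvPolynomial (Fin n) 𝕜 ⧸ pointsIdeal 𝕜 n) =
      algebraMap _ _ (Ideal.Quotient.mk (pointsIdeal 𝕜 n) (X i)) := IsLocalization.mk'_spec _ _ _
  refine ⟨e, fun j => (IsLocalization.map_units _ s).mul_right_cancel ?_⟩
  have hmul : Ideal.Quotient.mk (pointsIdeal 𝕜 n) (X i) *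
      Ideal.Quotient.mk (pointsIdeal 𝕜 n) (X j) =
        (if j = i then Ideal.Quotient.mk (pointsIdeal 𝕜 n) (X i) else 0) * s := by
    split_ifs with hji
    · subst hji
      simp only [s, map_sum, Finset.mul_sum]
      rw [Finset.sum_eq_single j (fun k _ hk => mk_X_mul_X_of_ne hk.symm) (by simp)]
    · rw [mk_X_mul_X_of_ne (Ne.symm hji), zero_mul]
  rw [mul_right_comm, hes, ← map_mul (algebraMap _ _), hmul, map_mul]

/-- The coordinate ring of the points maps to the field by evaluation at a coordinate point. -/
theorem exists_eval_point (𝕜 : Type*) [Field 𝕜] {n : ℕ} (i : Fin n) :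
    ∃ φ : (MvPolynomial (Fin n) 𝕜 ⧸ pointsIdeal 𝕜 n) →+* 𝕜, ∀ j : Fin n,
      φ (Ideal.Quotient.mk (pointsIdeal 𝕜 n) (X j)) = if j = i then 1 else 0 := by
  let ev : MvPolynomial (Fin n) 𝕜 →+* 𝕜 := eval fun j => if j = i then 1 else 0
  have hker : ∀ a ∈ pointsIdeal 𝕜 n, ev a = 0 := by
    refine (Ideal.span_le (I := RingHom.ker ev)).mpr ?_
    rintro _ ⟨a, b, hab, rfl⟩
    simp only [SetLike.mem_coe, RingHom.mem_ker, ev, map_mul, eval_X]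
    grind
  exact ⟨Ideal.Quotient.lift _ ev hker, fun j => by simp [ev]⟩

/-- Theorem 5.4 (a) for `n` points: the Stanley-Reisner ring `R` of
`n ≥ 2` points is nearly Gorenstein (`𝔪 ⊆ tr(ω_R) = I_R·I_R⁻¹` for the canonical
ideal `I_R = (x₁-x₂, …, x₁-xₙ)`) and level (the canonical ideal has a minimal
homogeneous generating set all of whose members have the same degree). -/
theorem points_nearlyGorenstein_and_level (𝕜 : Type*) [Field 𝕜] (n : ℕ) (hn : 2 ≤ n)
    (z : Fin n) (hz : (z : ℕ) = 0)
    (Ic : Ideal (MvPolynomial (Fin n) 𝕜 ⧸ pointsIdeal 𝕜 n))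
    (hIc : Ic = Ideal.span {x | ∃ i : Fin n, i ≠ z ∧
      x = Ideal.Quotient.mk (pointsIdeal 𝕜 n) (X z - X i)}) :
    -- `R` is nearly Gorenstein:
    (Ideal.span (Set.range (X : Fin n → MvPolynomial (Fin n) 𝕜))).map
        (Ideal.Quotient.mk (pointsIdeal 𝕜 n)) ≤ traceIdeal Ic ∧
    -- `R` is level:
    ∃ (d₀ : ℕ) (T : Finset (MvPolynomial (Fin n) 𝕜 ⧸ pointsIdeal 𝕜 n)),
      Ideal.span (↑T : Set _) = Ic ∧
      (∀ t ∈ T, ∃ q : MvPolynomial (Fin n) 𝕜,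
        q.IsHomogeneous d₀ ∧ Ideal.Quotient.mk (pointsIdeal 𝕜 n) q = t) ∧
      (∀ t ∈ T, t ∉ Ideal.span (↑(T.erase t) : Set _)) := by
  subst hIc
  refine ⟨?_, 1, (Finset.univ.erase z).image
    fun i => Ideal.Quotient.mk (pointsIdeal 𝕜 n) (X z - X i), ?_, ?_, ?_⟩
  · rw [Ideal.map_span, Ideal.span_le]
    rintro _ ⟨_, ⟨i, rfl⟩, rfl⟩
    obtain ⟨e, he⟩ := exists_point_idempotent 𝕜 i
    obtain ⟨j, hj, hgen⟩ : ∃ j : Fin n, j ≠ z ∧ (i = z ∨ i = j) := by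
      by_cases hi : i = z
      · have : Nontrivial (Fin n) := Fin.nontrivial_iff_two_le.mpr hn
        obtain ⟨j, hj⟩ := exists_ne z
        exact ⟨j, hj, Or.inl hi⟩
      · exact ⟨i, hi, Or.inr rfl⟩
    set Ic := Ideal.span {x | ∃ i : Fin n, i ≠ z ∧
      x = Ideal.Quotient.mk (pointsIdeal 𝕜 n) (X z - X i)}
    have hmem : Ideal.Quotient.mk (pointsIdeal 𝕜 n) (X z - X j) ∈ Ic :=
      Ideal.subset_span ⟨j, hj, rfl⟩
    have hinv : ∀ w ∈ Ic, ∃ r, e * algebraMap _ (FractionRing _) w =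
        algebraMap (MvPolynomial (Fin n) 𝕜 ⧸ pointsIdeal 𝕜 n) _ r := by
      intro w hw
      induction hw using Submodule.span_induction with
      | mem x hx =>
        obtain ⟨k, -, rfl⟩ := hx
        exact ⟨(if z = i then Ideal.Quotient.mk (pointsIdeal 𝕜 n) (X i) else 0) -
          if k = i then Ideal.Quotient.mk (pointsIdeal 𝕜 n) (X i) else 0, by
            simp only [map_sub, mul_sub, he]⟩
      | zero => exact ⟨0, by simp⟩
      | add x y _ _ hx hy =>
        obtain ⟨a, ha⟩ := hx
        obtain ⟨b, hb⟩ := hy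
        exact ⟨a + b, by rw [map_add, mul_add, ha, hb, map_add]⟩
      | smul a x _ hx =>
        obtain ⟨b, hb⟩ := hx
        exact ⟨a * b, by rw [smul_eq_mul, map_mul, mul_left_comm, hb, map_mul]⟩
    have hprod := Submodule.subset_span (R := MvPolynomial (Fin n) 𝕜 ⧸ pointsIdeal 𝕜 n)
      (s := {z | ∃ x ∈ Ic, ∃ y : FractionRing _, (∀ w ∈ Ic, ∃ r,
        y * algebraMap _ (FractionRing _) w = algebraMap _ (FractionRing _) r) ∧
        z = algebraMap _ (FractionRing _) x * y}) ⟨_, hmem, e, hinv, rfl⟩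
    rw [mul_comm, map_sub, map_sub, mul_sub, he, he] at hprod
    rw [traceIdeal, SetLike.mem_coe, Submodule.mem_comap, Algebra.linearMap_apply]
    rcases hgen with rfl | rfl
    · simpa [hj] using hprod
    · simpa [hj.symm] using hprod
  · congr 1
    ext x
    simp [eq_comm]
  · intro t ht
    obtain ⟨i, -, rfl⟩ := Finset.mem_image.mp ht
    exact ⟨_, (isHomogeneous_X 𝕜 z).sub (isHomogeneous_X 𝕜 i), rfl⟩
  · intro t ht hspan
    obtain ⟨i, hi, rfl⟩ := Finset.mem_image.mp ht
    have hiz : i ≠ z := Finset.ne_of_mem_erase hi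
    obtain ⟨φ, hφ⟩ := exists_eval_point 𝕜 i
    have hker : Ideal.Quotient.mk (pointsIdeal 𝕜 n) (X z - X i) ∈ RingHom.ker φ := by
      refine Ideal.span_le.mpr ?_ hspan
      intro x hx
      obtain ⟨hne, hx⟩ := Finset.mem_erase.mp (Finset.mem_coe.mp hx)
      obtain ⟨j, -, rfl⟩ := Finset.mem_image.mp hx
      have hji : j ≠ i := by
        rintro rfl
        exact hne rfl
      rw [SetLike.mem_coe, RingHom.mem_ker, map_sub, map_sub, hφ, hφ, if_neg hiz.symm,
        if_neg hji, sub_zero]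
    rw [RingHom.mem_ker, map_sub, map_sub, hφ, hφ, if_neg hiz.symm, if_pos rfl] at hker
    simp at hker

end
end

section
/- Let $n \geq 2$ and let $R$ be the Stanley-Reisner ring of the path with $n$ edges, $R = \Bbbk[x_1,\dots,x_{n+1}]/(x_i x_j : |i-j| \geq 2)$, with canonical ideal $I_R = (x_k x_{k+1}^2 + x_{k+1}^2 x_{k+2} : 1 \leq k \leq n-1)$ and $g = \sum_{k=1}^n x_k^2 x_{k+1}^2 \in I_R$. Then the elements $x_1^2/g$, $x_{n+1}^2/g$, and $(\sum_{j=1}^n x_j x_{j+1})/g$ of the total quotient ring all lie in $I_R^{-1}$, and consequently $x_1, \dots, x_{n+1} \in I_R I_R^{-1} = \mathrm{tr}(\omega_R)$; hence $R$ is nearly Gorenstein. -/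
noncomputable section

open MvPolynomial
/-- `x ∈ I⁻¹`, i.e. `x · I ⊆ R` inside the total quotient ring of `R`. -/
def MemInv {R : Type*} [CommRing R] (I : Ideal R) (x : FractionRing R) : Prop :=
  ∀ y ∈ I, ∃ r : R, x * algebraMap R (FractionRing R) y = algebraMap R (FractionRing R) r

/-- The Stanley-Reisner ideal of the path with `n` edges. -/
def pathIdeal (𝕜 : Type*) [Field 𝕜] (n : ℕ) : Ideal (MvPolynomial (Fin (n + 1)) 𝕜) :=
  Ideal.span {x | ∃ i j : Fin (n + 1), (i : ℕ) + 2 ≤ (j : ℕ) ∧ x = X i * X j}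

/-- If `a * f ∈ (g)` for every `f` in a generating set of `I`, then `a / g ∈ I⁻¹`. -/
theorem memInv_span_mk' {R : Type*} [CommRing R] {S : Set R} {a : R} (g : nonZeroDivisors R)
    (h : ∀ f ∈ S, ∃ r : R, a * f = r * g) :
    MemInv (Ideal.span S) (IsLocalization.mk' (FractionRing R) a g) := by
  have key : Ideal.span S ≤ Submodule.comap (LinearMap.mulLeft R a) (Ideal.span {(g : R)}) := by
    refine Ideal.span_le.2 fun f hf => ?_
    obtain ⟨r, hr⟩ := h f hf
    exact Ideal.mem_span_singleton'.2 ⟨r, hr.symm⟩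
  intro y hy
  obtain ⟨r, hr⟩ := Ideal.mem_span_singleton'.1 (key hy)
  refine ⟨r, ?_⟩
  rw [mul_comm, IsLocalization.mul_mk'_eq_mk'_of_mul, IsLocalization.mk'_eq_iff_eq_mul,
    ← map_mul, hr, LinearMap.mulLeft_apply, mul_comm]

/-- If `a / g ∈ I⁻¹` and `x = (a / g) * f` with `f ∈ I`, then `x` lies in the trace of `I`. -/
theorem mem_traceIdeal_of_memInv_mk' {R : Type*} [CommRing R] {I : Ideal R} {a f x : R}
    (g : nonZeroDivisors R) (ha : MemInv I (IsLocalization.mk' (FractionRing R) a g))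
    (hf : f ∈ I) (h : a * f = x * g) : x ∈ traceIdeal I := by
  refine Submodule.subset_span ⟨f, hf, _, ha, ?_⟩
  rw [Algebra.linearMap_apply, IsLocalization.mul_mk'_eq_mk'_of_mul, eq_comm,
    IsLocalization.mk'_eq_iff_eq_mul, ← map_mul, ← h, mul_comm]

/-- The endomorphism of the polynomial ring killing all variables outside the edge
`{e, e + 1}` of the path. -/
def edgeHom (𝕜 : Type*) [Field 𝕜] {n : ℕ} (e : Fin n) :
    MvPolynomial (Fin (n + 1)) 𝕜 →ₐ[𝕜] MvPolynomial (Fin (n + 1)) 𝕜 :=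
  aeval fun i => if (i : ℕ) = e ∨ (i : ℕ) = e + 1 then X i else 0

theorem edgeHom_X (𝕜 : Type*) [Field 𝕜] {n : ℕ} (e : Fin n) (i : Fin (n + 1)) :
    edgeHom 𝕜 e (X i) = if (i : ℕ) = e ∨ (i : ℕ) = e + 1 then X i else 0 :=
  aeval_X _ _

theorem edgeHom_eq_zero_of_mem_pathIdeal {𝕜 : Type*} [Field 𝕜] {n : ℕ} (e : Fin n)
    {p : MvPolynomial (Fin (n + 1)) 𝕜} (hp : p ∈ pathIdeal 𝕜 n) : edgeHom 𝕜 e p = 0 := by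
  suffices pathIdeal 𝕜 n ≤ RingHom.ker (edgeHom 𝕜 e) from this hp
  refine Ideal.span_le.2 ?_
  rintro _ ⟨i, j, hij, rfl⟩
  rw [SetLike.mem_coe, RingHom.mem_ker, map_mul, edgeHom_X, edgeHom_X]
  split_ifs <;> first | omega | simp

/-- Killing the variables outside an edge does not change the coefficients of the monomials
supported on that edge. -/
theorem coeff_edgeHom {𝕜 : Type*} [Field 𝕜] {n : ℕ} (e : Fin n)
    (p : MvPolynomial (Fin (n + 1)) 𝕜) {m : Fin (n + 1) →₀ ℕ}
    (hm : ∀ i, m i ≠ 0 → (i : ℕ) = e ∨ (i : ℕ) = e + 1) :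
    coeff m (edgeHom 𝕜 e p) = coeff m p := by
  let s : Set (Fin (n + 1)) := {i | ¬((i : ℕ) = e ∨ (i : ℕ) = e + 1)}
  let J : Ideal (MvPolynomial (Fin (n + 1)) 𝕜) := Ideal.span (X '' s)
  have hhom : (Ideal.Quotient.mkₐ 𝕜 J).comp (edgeHom 𝕜 e) = Ideal.Quotient.mkₐ 𝕜 J := by
    ext i
    rw [AlgHom.comp_apply, edgeHom_X]
    split_ifs with hi
    · rfl
    · rw [map_zero, eq_comm]
      exact Ideal.Quotient.eq_zero_iff_mem.2 (Ideal.subset_span ⟨i, hi, rfl⟩)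
  have hmem : edgeHom 𝕜 e p - p ∈ J := Ideal.Quotient.eq.1 (DFunLike.congr_fun hhom p)
  by_contra hne
  obtain ⟨i, hi, hmi⟩ := mem_ideal_span_X_image.1 hmem m
    (by rwa [mem_support_iff, coeff_sub, sub_ne_zero])
  exact hi (hm i hmi)

/-- The Stanley-Reisner ideal of the path is the intersection of the primes of its edges. -/
theorem mem_pathIdeal_iff {𝕜 : Type*} [Field 𝕜] {n : ℕ} (hn : 1 ≤ n)
    {p : MvPolynomial (Fin (n + 1)) 𝕜} :
    p ∈ pathIdeal 𝕜 n ↔ ∀ e : Fin n, edgeHom 𝕜 e p = 0 := by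
  refine ⟨fun hp e => edgeHom_eq_zero_of_mem_pathIdeal e hp, fun hp => ?_⟩
  have hspan : pathIdeal 𝕜 n = Ideal.span ((fun m => monomial m (1 : 𝕜)) ''
      {m | ∃ i j : Fin (n + 1), (i : ℕ) + 2 ≤ j ∧
        m = Finsupp.single i 1 + Finsupp.single j 1}) := by
    refine congrArg Ideal.span (Set.ext fun x => ⟨?_, ?_⟩)
    · rintro ⟨i, j, hij, rfl⟩
      exact ⟨_, ⟨i, j, hij, rfl⟩, by simp [X, monomial_mul]⟩
    · rintro ⟨_, ⟨i, j, hij, rfl⟩, rfl⟩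
      exact ⟨i, j, hij, by simp [X, monomial_mul]⟩
  rw [hspan, mem_ideal_span_monomial_image]
  intro m hm
  by_contra! hdiv
  have hclose : ∀ i j : Fin (n + 1), m i ≠ 0 → m j ≠ 0 → (j : ℕ) ≤ i + 1 := by
    intro i j hi hj
    by_contra! hij
    refine hdiv _ ⟨i, j, hij, rfl⟩ fun k => ?_
    have hne : i ≠ j := fun h => by subst h; omega
    rw [Finsupp.add_apply, Finsupp.single_apply, Finsupp.single_apply]
    split_ifs with h₁ h₂ h₂
    · exact absurd (h₁.trans h₂.symm) hne
    · subst h₁; omega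
    · subst h₂; omega
    · omega
  obtain ⟨e, he⟩ : ∃ e : Fin n, ∀ i, m i ≠ 0 → (i : ℕ) = e ∨ (i : ℕ) = e + 1 := by
    by_cases hzero : ∃ i, m i ≠ 0
    · obtain ⟨i, hi, hmin⟩ := Finset.exists_minimal (s := m.support) (by
        obtain ⟨i, hi⟩ := hzero
        exact ⟨i, Finsupp.mem_support_iff.2 hi⟩)
      have hle : ∀ j, m j ≠ 0 → (i : ℕ) ≤ j := fun j hj => by
        by_contra! hlt
        exact absurd (hmin (Finsupp.mem_support_iff.2 hj) hlt.le) (not_le.2 hlt)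
      rw [Finsupp.mem_support_iff] at hi
      refine ⟨⟨min i (n - 1), by omega⟩, fun j hj => ?_⟩
      have h₁ := hle j hj
      have h₂ := hclose i j hi hj
      have h₃ := j.isLt
      simp only
      omega
    · push Not at hzero
      exact ⟨⟨0, hn⟩, fun i hi => absurd (hzero i) hi⟩
  rw [mem_support_iff, ← coeff_edgeHom e p he, hp e] at hm
  exact hm (coeff_zero m)

/-- Equality in the Stanley-Reisner ring of the path can be tested edge by edge. -/
theorem mk_pathIdeal_eq_iff {𝕜 : Type*} [Field 𝕜] {n : ℕ} (hn : 1 ≤ n)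
    {p q : MvPolynomial (Fin (n + 1)) 𝕜} :
    Ideal.Quotient.mk (pathIdeal 𝕜 n) p = Ideal.Quotient.mk (pathIdeal 𝕜 n) q ↔
      ∀ e : Fin n, edgeHom 𝕜 e p = edgeHom 𝕜 e q := by
  simp only [Ideal.Quotient.eq, mem_pathIdeal_iff hn, map_sub, sub_eq_zero]

/-- On an edge, a sum over all edges reduces to the term of that edge. -/
theorem edgeHom_sum_pow {𝕜 : Type*} [Field 𝕜] {n d : ℕ} (hd : d ≠ 0) (e : Fin n) :
    edgeHom 𝕜 e (∑ k : Fin n, X k.castSucc ^ d * X k.succ ^ d) =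
      X e.castSucc ^ d * X e.succ ^ d := by
  rw [map_sum, Finset.sum_eq_single e]
  · simp [edgeHom_X]
  · intro k _ hk
    rw [map_mul, map_pow, map_pow, edgeHom_X, edgeHom_X]
    have hk' : (k : ℕ) ≠ e := fun h => hk (Fin.ext h)
    simp only [Fin.val_castSucc, Fin.val_succ]
    split_ifs <;> first | omega | simp [hd]
  · simp

theorem mk_sum_sq_mem_nonZeroDivisors {𝕜 : Type*} [Field 𝕜] {n : ℕ} (hn : 1 ≤ n) :
    Ideal.Quotient.mk (pathIdeal 𝕜 n) (∑ k : Fin n, X k.castSucc ^ 2 * X k.succ ^ 2) ∈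
      nonZeroDivisors (MvPolynomial (Fin (n + 1)) 𝕜 ⧸ pathIdeal 𝕜 n) := by
  rw [mem_nonZeroDivisors_iff_right]
  intro r hr
  obtain ⟨p, rfl⟩ := Ideal.Quotient.mk_surjective r
  rw [← map_mul, Ideal.Quotient.eq_zero_iff_mem, mem_pathIdeal_iff hn] at hr
  rw [Ideal.Quotient.eq_zero_iff_mem, mem_pathIdeal_iff hn]
  intro e
  have h := hr e
  rw [map_mul, edgeHom_sum_pow two_ne_zero] at h
  exact (mul_eq_zero.1 h).resolve_right
    (mul_ne_zero (pow_ne_zero _ (X_ne_zero _)) (pow_ne_zero _ (X_ne_zero _)))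

/-- The polynomial `x_a x_b² + x_b² x_c`; for consecutive `a`, `b`, `c` these generate the
canonical ideal of the path. -/
def pathGen (𝕜 : Type*) [Field 𝕜] {n : ℕ} (a b c : Fin (n + 1)) :
    MvPolynomial (Fin (n + 1)) 𝕜 :=
  X a * X b ^ 2 + X b ^ 2 * X c

/-- `(∑ x_j x_{j+1}) · (x_a x_b² + x_b² x_c) = x_b · g` in the Stanley-Reisner ring. -/
theorem mk_sum_mul_pathGen {𝕜 : Type*} [Field 𝕜] {n : ℕ} {a b c : Fin (n + 1)}
    (hab : (b : ℕ) = a + 1) (hac : (c : ℕ) = a + 2) :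
    Ideal.Quotient.mk (pathIdeal 𝕜 n) (∑ j : Fin n, X j.castSucc * X j.succ) *
        Ideal.Quotient.mk (pathIdeal 𝕜 n) (pathGen 𝕜 a b c) =
      Ideal.Quotient.mk (pathIdeal 𝕜 n) (X b) *
        Ideal.Quotient.mk (pathIdeal 𝕜 n) (∑ j : Fin n, X j.castSucc ^ 2 * X j.succ ^ 2) := by
  obtain ⟨k, hk'⟩ := a
  obtain ⟨_, hb⟩ := b
  obtain ⟨_, hc⟩ := c
  dsimp only at hab hac
  subst hab hac
  rw [← map_mul, ← map_mul, mk_pathIdeal_eq_iff (by omega)]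
  rintro ⟨e, he⟩
  have hsum := edgeHom_sum_pow (𝕜 := 𝕜) one_ne_zero ⟨e, he⟩
  simp only [pow_one] at hsum
  rw [map_mul, map_mul, edgeHom_sum_pow two_ne_zero, hsum]
  simp only [pathGen, map_add, map_mul, map_pow, edgeHom_X, Fin.castSucc_mk, Fin.succ_mk]
  by_cases h₁ : e = k
  · subst h₁
    simp
    ring
  by_cases h₂ : e = k + 1
  · subst h₂
    simp [show k ≠ k + 1 + 1 by omega]
    ring
  · simp [show k + 1 ≠ e by omega, show k ≠ e by omega]

/-- `x_0² · (x_a x_b² + x_b² x_c)` equals `x_0 · g` if `a = 0`, and vanishes otherwise. -/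
theorem mk_first_sq_mul_pathGen {𝕜 : Type*} [Field 𝕜] {n : ℕ} {a b c : Fin (n + 1)}
    (hab : (b : ℕ) = a + 1) (hac : (c : ℕ) = a + 2) :
    Ideal.Quotient.mk (pathIdeal 𝕜 n) (X 0 ^ 2) *
        Ideal.Quotient.mk (pathIdeal 𝕜 n) (pathGen 𝕜 a b c) =
      Ideal.Quotient.mk (pathIdeal 𝕜 n) (if (a : ℕ) = 0 then X 0 else 0) *
        Ideal.Quotient.mk (pathIdeal 𝕜 n) (∑ j : Fin n, X j.castSucc ^ 2 * X j.succ ^ 2) := by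
  obtain ⟨k, hk'⟩ := a
  obtain ⟨_, hb⟩ := b
  obtain ⟨_, hc⟩ := c
  dsimp only at hab hac
  subst hab hac
  rw [← map_mul, ← map_mul, mk_pathIdeal_eq_iff (by omega)]
  rintro ⟨e, he⟩
  rw [map_mul, map_mul, edgeHom_sum_pow two_ne_zero, apply_ite (edgeHom 𝕜 _)]
  simp only [pathGen, map_add, map_mul, map_pow, map_zero, edgeHom_X, Fin.castSucc_mk,
    Fin.succ_mk]
  by_cases h₁ : e = 0
  · subst h₁
    by_cases hk : k = 0
    · subst hk
      simp
      ring
    · simp [hk]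
  · simp [show 0 ≠ e by omega]

/-- `x_n² · (x_a x_b² + x_b² x_c)` equals `x_n · g` if `c = n`, and vanishes otherwise. -/
theorem mk_last_sq_mul_pathGen {𝕜 : Type*} [Field 𝕜] {n : ℕ} {a b c : Fin (n + 1)}
    (hab : (b : ℕ) = a + 1) (hac : (c : ℕ) = a + 2) :
    Ideal.Quotient.mk (pathIdeal 𝕜 n) (X (Fin.last n) ^ 2) *
        Ideal.Quotient.mk (pathIdeal 𝕜 n) (pathGen 𝕜 a b c) =
      Ideal.Quotient.mk (pathIdeal 𝕜 n) (if (c : ℕ) = n then X (Fin.last n) else 0) *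
        Ideal.Quotient.mk (pathIdeal 𝕜 n) (∑ j : Fin n, X j.castSucc ^ 2 * X j.succ ^ 2) := by
  obtain ⟨k, hk'⟩ := a
  obtain ⟨_, hb⟩ := b
  obtain ⟨_, hc⟩ := c
  dsimp only at hab hac
  subst hab hac
  rw [← map_mul, ← map_mul, mk_pathIdeal_eq_iff (by omega)]
  rintro ⟨e, he⟩
  rw [map_mul, map_mul, edgeHom_sum_pow two_ne_zero, apply_ite (edgeHom 𝕜 _)]
  simp only [pathGen, map_add, map_mul, map_pow, map_zero, edgeHom_X, Fin.castSucc_mk,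
    Fin.succ_mk]
  by_cases h₁ : n = e + 1
  · subst h₁
    by_cases hk : k + 2 = e + 1
    · obtain rfl : e = k + 1 := by omega
      simp [show k ≠ k + 1 + 1 by omega, Fin.last]
      ring
    · simp [show k + 1 ≠ e by omega, show k ≠ e by omega, show k ≠ e + 1 by omega, hk]
  · simp [h₁, show n ≠ e by omega]

/-- Lemma 5.3, second part: for the Stanley-Reisner ring `R` of the
path with `n ≥ 2` edges, with canonical ideal
`I_R = (x_k x_{k+1}² + x_{k+1}² x_{k+2} : 1 ≤ k ≤ n-1)` and non-zerodivisor
`g = ∑ x_k² x_{k+1}² ∈ I_R`, the elements `x₁²/g`, `x_{n+1}²/g` and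
`(∑ x_j x_{j+1})/g` lie in `I_R⁻¹`; consequently all `xᵢ` lie in
`I_R·I_R⁻¹ = tr(ω_R)`, hence `R` is nearly Gorenstein. -/
theorem path_nearlyGorenstein (𝕜 : Type*) [Field 𝕜] (n : ℕ) (hn : 2 ≤ n)
    (Ic : Ideal (MvPolynomial (Fin (n + 1)) 𝕜 ⧸ pathIdeal 𝕜 n))
    (hIc : Ic = Ideal.span {x | ∃ km : ℕ, ∃ h : km + 2 ≤ n,
      x = Ideal.Quotient.mk (pathIdeal 𝕜 n)
        (X (⟨km, by omega⟩ : Fin (n + 1)) * X (⟨km + 1, by omega⟩ : Fin (n + 1)) ^ 2 +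
         X (⟨km + 1, by omega⟩ : Fin (n + 1)) ^ 2 * X (⟨km + 2, by omega⟩ : Fin (n + 1)))})
    (g : MvPolynomial (Fin (n + 1)) 𝕜 ⧸ pathIdeal 𝕜 n)
    (hg : g = Ideal.Quotient.mk (pathIdeal 𝕜 n)
      (∑ k : Fin n, X k.castSucc ^ 2 * X k.succ ^ 2)) :
    -- `x₁²/g ∈ I_R⁻¹`:
    (∃ z : FractionRing (MvPolynomial (Fin (n + 1)) 𝕜 ⧸ pathIdeal 𝕜 n),
      z * algebraMap _ _ g = algebraMap _ _ (Ideal.Quotient.mk (pathIdeal 𝕜 n)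
        (X (⟨0, by omega⟩ : Fin (n + 1)) ^ 2)) ∧ MemInv Ic z) ∧
    -- `x_{n+1}²/g ∈ I_R⁻¹`:
    (∃ z : FractionRing (MvPolynomial (Fin (n + 1)) 𝕜 ⧸ pathIdeal 𝕜 n),
      z * algebraMap _ _ g = algebraMap _ _ (Ideal.Quotient.mk (pathIdeal 𝕜 n)
        (X (⟨n, by omega⟩ : Fin (n + 1)) ^ 2)) ∧ MemInv Ic z) ∧
    -- `(∑ⱼ x_j x_{j+1})/g ∈ I_R⁻¹`:
    (∃ z : FractionRing (MvPolynomial (Fin (n + 1)) 𝕜 ⧸ pathIdeal 𝕜 n),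
      z * algebraMap _ _ g = algebraMap _ _ (Ideal.Quotient.mk (pathIdeal 𝕜 n)
        (∑ j : Fin n, X j.castSucc * X j.succ)) ∧ MemInv Ic z) ∧
    -- all `xᵢ` lie in `tr(ω_R) = I_R·I_R⁻¹`:
    (∀ i : Fin (n + 1), Ideal.Quotient.mk (pathIdeal 𝕜 n) (X i) ∈ traceIdeal Ic) ∧
    -- hence `R` is nearly Gorenstein:
    (Ideal.span (Set.range (X : Fin (n + 1) → MvPolynomial (Fin (n + 1)) 𝕜))).map
      (Ideal.Quotient.mk (pathIdeal 𝕜 n)) ≤ traceIdeal Ic := by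
  have hn₁ : 1 ≤ n := by omega
  subst hIc hg
  let g : nonZeroDivisors (MvPolynomial (Fin (n + 1)) 𝕜 ⧸ pathIdeal 𝕜 n) :=
    ⟨_, mk_sum_sq_mem_nonZeroDivisors (𝕜 := 𝕜) hn₁⟩
  let S : Set (MvPolynomial (Fin (n + 1)) 𝕜 ⧸ pathIdeal 𝕜 n) :=
    {x | ∃ k : ℕ, ∃ h : k + 2 ≤ n, x = Ideal.Quotient.mk (pathIdeal 𝕜 n)
      (pathGen 𝕜 ⟨k, by omega⟩ ⟨k + 1, by omega⟩ ⟨k + 2, by omega⟩)}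
  have hfirst := memInv_span_mk' (S := S)
    (a := Ideal.Quotient.mk (pathIdeal 𝕜 n) (X ⟨0, by omega⟩ ^ 2)) g
    (by rintro _ ⟨k, h, rfl⟩; exact ⟨_, mk_first_sq_mul_pathGen rfl rfl⟩)
  have hlast := memInv_span_mk' (S := S)
    (a := Ideal.Quotient.mk (pathIdeal 𝕜 n) (X ⟨n, by omega⟩ ^ 2)) g
    (by rintro _ ⟨k, h, rfl⟩; exact ⟨_, mk_last_sq_mul_pathGen rfl rfl⟩)
  have hsum := memInv_span_mk' (S := S)
    (a := Ideal.Quotient.mk (pathIdeal 𝕜 n) (∑ j : Fin n, X j.castSucc * X j.succ)) g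
    (by rintro _ ⟨k, h, rfl⟩; exact ⟨_, mk_sum_mul_pathGen rfl rfl⟩)
  have hX : ∀ i : Fin (n + 1), Ideal.Quotient.mk (pathIdeal 𝕜 n) (X i) ∈
      traceIdeal (Ideal.span S) := by
    rintro ⟨i, hi⟩
    rcases i with _ | k
    · refine mem_traceIdeal_of_memInv_mk' g hfirst
        (Ideal.subset_span ⟨0, by omega, rfl⟩) ?_
      exact (mk_first_sq_mul_pathGen rfl rfl).trans (by rw [if_pos rfl]; rfl)
    · by_cases hk : k + 2 ≤ n
      · exact mem_traceIdeal_of_memInv_mk' g hsum (Ideal.subset_span ⟨k, hk, rfl⟩)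
          (mk_sum_mul_pathGen rfl rfl)
      · obtain rfl : n = k + 1 := by omega
        refine mem_traceIdeal_of_memInv_mk' g hlast
          (Ideal.subset_span ⟨k - 1, by omega, rfl⟩) ?_
        exact (mk_last_sq_mul_pathGen rfl rfl).trans (by rw [if_pos (by dsimp only; omega)]; rfl)
  refine ⟨⟨_, IsLocalization.mk'_spec _ _ g, hfirst⟩, ⟨_, IsLocalization.mk'_spec _ _ g, hlast⟩,
    ⟨_, IsLocalization.mk'_spec _ _ g, hsum⟩, hX, ?_⟩
  rw [Ideal.map_span, Ideal.span_le]
  rintro _ ⟨_, ⟨i, rfl⟩, rfl⟩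
  exact hX i

end
end

section
/- Let $S$ be a pointed affine semigroup of dimension $d$ such that $\Bbbk[S]$ is Cohen-Macaulay, let $v, v' \in \mathbb{Z}S$ with $v' - v \in \overline{S} \setminus S$ (a hole), where $\overline{S} = \mathbb{Z}S \cap \mathbb{R}_{\geq 0}S$. Then there exists an extremal ray $l$ of $S$ such that $(v' - v) + a \notin S$ for some $a \in l$; more precisely, there is a facet $F$ of $S$ with $((v' - v) + \mathbb{Z}F) \cap S = \emptyset$. -/
noncomputable section
/-- Coercion `ℤⁿ → ℚⁿ`. -/
def intVecToRat {n : ℕ} (a : Fin n → ℤ) : Fin n → ℚ := fun i => (a i : ℚ)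

/-- `F` is a face of the affine semigroup `S`. -/
def IsFaceOfSemigroup {n : ℕ} (S : AddSubmonoid (Fin n → ℤ)) (F : Set (Fin n → ℤ)) : Prop :=
  F ⊆ (S : Set (Fin n → ℤ)) ∧ (0 : Fin n → ℤ) ∈ F ∧
    ∀ a ∈ S, ∀ b ∈ S, (a + b ∈ F ↔ a ∈ F ∧ b ∈ F)

/-- The dimension of a subset of `ℤⁿ`: the rank of the rational vector space it
spans. -/
def zdim {n : ℕ} (F : Set (Fin n → ℤ)) : ℕ :=
  Module.finrank ℚ (Submodule.span ℚ (intVecToRat '' F))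

/-- The maximal monomial ideal of the affine semigroup ring `k[S]`. -/
def sgMaxIdealZ (k : Type*) [Field k] {n : ℕ} (S : AddSubmonoid (Fin n → ℤ)) :
    Ideal (AddMonoidAlgebra k ↥S) :=
  Ideal.span {x | ∃ s : ↥S, s ≠ 0 ∧ x = AddMonoidAlgebra.single s (1 : k)}

section LocalAlgebra

open RingTheory.Sequence

variable {A : Type*} [CommRing A]

theorem exists_prime_smul_eq_zero [IsNoetherianRing A] {M : Type*} [AddCommGroup M] [Module A M]
    {I : Ideal A} {z : M} (hz : z ≠ 0) (hI : ∀ a ∈ I, a • z = 0) :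
    ∃ q : PrimeSpectrum A, I ≤ q.asIdeal ∧ ∃ w : M, w ≠ 0 ∧ ∀ a ∈ q.asIdeal, a • w = 0 := by
  obtain ⟨q, hq, hle⟩ := exists_le_isAssociatedPrime_of_isNoetherianRing A z hz
  obtain ⟨hprime, w, rfl⟩ := isAssociatedPrime_iff.1 hq
  refine ⟨⟨_, hprime⟩, fun a ha => hle ?_, w, ?_, fun a ha => ?_⟩
  · simpa [Submodule.mem_colon_singleton] using hI a ha
  · rintro rfl
    exact hprime.ne_top (by simp)
  · simpa [Submodule.mem_colon_singleton] using ha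

theorem quotSMulTop_mk_eq_zero_iff {M : Type*} [AddCommGroup M] [Module A M] (x : A) (w : M) :
    (Submodule.Quotient.mk w : QuotSMulTop x M) = 0 ↔ ∃ y, x • y = w := by
  rw [Submodule.Quotient.mk_eq_zero, Submodule.mem_smul_pointwise_iff_exists]
  simp

variable [IsLocalRing A] [IsNoetherianRing A]

theorem exists_smul_eq_zero_of_isSMulRegular {M : Type*} [AddCommGroup M] [Module A M]
    [Module.Finite A M] {x : A} (hx : x ∈ IsLocalRing.maximalIdeal A) (hreg : IsSMulRegular M x)
    {I : Ideal A} {z : M} (hz : z ≠ 0) (hI : ∀ a ∈ I, a • z = 0) :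
    ∃ w : M, (∀ a ∈ I, a • w = 0) ∧ ∀ y, x • y ≠ w := by
  let N : Submodule A M :=
    { carrier := {w | ∀ a ∈ I, a • w = 0}
      add_mem' := fun {u v} hu hv a ha => by simp [hu a ha, hv a ha]
      zero_mem' := fun a _ => smul_zero a
      smul_mem' := fun c u hu a ha => by rw [smul_comm, hu a ha, smul_zero] }
  by_contra! h
  have hN : N ≤ Ideal.span {x} • N := fun w hw => by
    obtain ⟨y, rfl⟩ := h w hw
    refine Submodule.smul_mem_smul (Ideal.mem_span_singleton_self x) fun a ha => hreg ?_
    have := hw a ha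
    rw [smul_comm] at this
    simpa using this
  have hbot : N = ⊥ := Submodule.eq_bot_of_le_smul_of_le_jacobson_bot _ N
    (IsNoetherian.noetherian N) hN (by
      rw [IsLocalRing.jacobson_eq_maximalIdeal ⊥ bot_ne_top, Ideal.span_singleton_le_iff_mem]
      exact hx)
  exact hz (by simpa [hbot] using (show z ∈ N from hI))

/-- A prime annihilating a nonzero element of `M` has coheight at least the length of any
weakly `M`-regular sequence. -/
theorem length_le_coheight_of_smul_eq_zero {M : Type*} [AddCommGroup M] [Module A M]
    [Module.Finite A M] {rs : List A} (hmem : ∀ x ∈ rs, x ∈ IsLocalRing.maximalIdeal A)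
    (hrs : IsWeaklyRegular M rs) (p : PrimeSpectrum A) {z : M} (hz : z ≠ 0)
    (hp : ∀ a ∈ p.asIdeal, a • z = 0) : (rs.length : ℕ∞) ≤ Order.coheight p := by
  induction rs generalizing M p z with
  | nil => simp
  | cons x rs ih =>
    rw [isWeaklyRegular_cons_iff] at hrs
    have hx : x ∉ p.asIdeal := fun h => hz (hrs.1 (by simpa using hp x h))
    obtain ⟨w, hw, hwx⟩ := exists_smul_eq_zero_of_isSMulRegular (hmem x (by simp)) hrs.1 hz hp
    have hw0 : (Submodule.Quotient.mk w : QuotSMulTop x M) ≠ 0 := fun h => by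
      obtain ⟨y, hy⟩ := (quotSMulTop_mk_eq_zero_iff x w).1 h
      exact hwx y hy
    obtain ⟨q, hq, t, ht, htq⟩ := exists_prime_smul_eq_zero (I := p.asIdeal ⊔ Ideal.span {x}) hw0 (by
      intro a ha
      obtain ⟨b, hb, c, hc, rfl⟩ := Submodule.mem_sup.1 ha
      obtain ⟨c, rfl⟩ := Ideal.mem_span_singleton.1 hc
      rw [← Submodule.Quotient.mk_smul, quotSMulTop_mk_eq_zero_iff]
      exact ⟨c • w, by rw [add_smul, hw b hb, zero_add, mul_smul]⟩)
    have hlt : p < q := lt_of_le_of_ne (le_sup_left.trans hq) fun h =>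
      hx (h ▸ hq (Ideal.mem_sup_right (Ideal.mem_span_singleton_self x)))
    calc ((x :: rs).length : ℕ∞) = rs.length + 1 := by simp
      _ ≤ Order.coheight q + 1 := by
        gcongr
        exact ih (fun y hy => hmem y (by simp [hy])) hrs.2 q ht htq
      _ ≤ Order.coheight p := Order.coheight_add_one_le hlt

/-- A prime annihilating a nonzero element of `M ⧸ a M`, with `a` regular on `M`, has coheight
at least the length minus one of any weakly `M`-regular sequence. -/
theorem length_le_coheight_add_one {M : Type*} [AddCommGroup M] [Module A M]
    [Module.Finite A M] {rs : List A} (hmem : ∀ x ∈ rs, x ∈ IsLocalRing.maximalIdeal A)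
    (hrs : IsWeaklyRegular M rs) (p : PrimeSpectrum A) {a : A} (ha : IsSMulRegular M a) {z : M}
    (hz : ∀ y, a • y ≠ z) (hp : ∀ c ∈ p.asIdeal, ∃ y, a • y = c • z) :
    (rs.length : ℕ∞) ≤ Order.coheight p + 1 := by
  induction rs generalizing M p a z with
  | nil => simp
  | cons x rs ih =>
    rw [isWeaklyRegular_cons_iff] at hrs
    have hmem' : ∀ y ∈ rs, y ∈ IsLocalRing.maximalIdeal A := fun y hy => hmem y (by simp [hy])
    have exchange : ∀ b ∈ p.asIdeal, IsSMulRegular M b →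
        ∃ w : M, (∀ y, b • y ≠ w) ∧ ∀ c ∈ p.asIdeal, ∃ y, b • y = c • w := by
      intro b hb hbreg
      obtain ⟨w, hw⟩ := hp b hb
      refine ⟨w, fun y hy => hz y (hbreg ?_), fun c hc => ?_⟩
      · simp only
        rw [← hw, ← hy, smul_comm]
      · obtain ⟨y, hy⟩ := hp c hc
        refine ⟨y, ha ?_⟩
        simp only
        rw [smul_comm, hy, smul_comm a, hw, smul_comm]
    by_cases hbad : ∃ b ∈ p.asIdeal, IsSMulRegular (QuotSMulTop x M) b
    · obtain ⟨b, hbp, hbx⟩ := hbad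
      have hbx' : ∀ u v : M, b • u = x • v → ∃ y, x • y = u := fun u v huv => by
        rw [← quotSMulTop_mk_eq_zero_iff]
        refine hbx ?_
        simp only [smul_zero]
        rw [← Submodule.Quotient.mk_smul, quotSMulTop_mk_eq_zero_iff]
        exact ⟨v, huv.symm⟩
      have hbM : IsSMulRegular M b := by
        rw [isSMulRegular_iff_right_eq_zero_of_smul]
        intro u hu
        by_contra hu0
        obtain ⟨w, hw, hwx⟩ := exists_smul_eq_zero_of_isSMulRegular (I := Ideal.span {b})
          (hmem x (by simp)) hrs.1 hu0 (fun c hc => by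
            obtain ⟨c, rfl⟩ := Ideal.mem_span_singleton.1 hc
            rw [mul_comm, mul_smul, hu, smul_zero])
        obtain ⟨y, hy⟩ := hbx' w 0 (by simp [hw b (Ideal.mem_span_singleton_self b)])
        exact hwx y hy
      obtain ⟨w, hwb, hwp⟩ := exchange b hbp hbM
      have hxb : IsSMulRegular (QuotSMulTop b M) x := by
        rw [isSMulRegular_iff_right_eq_zero_of_smul]
        intro u hu
        obtain ⟨u, rfl⟩ := Submodule.Quotient.mk_surjective _ u
        rw [← Submodule.Quotient.mk_smul, quotSMulTop_mk_eq_zero_iff] at hu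
        obtain ⟨v, hv⟩ := hu
        obtain ⟨y, rfl⟩ := hbx' v u hv
        rw [quotSMulTop_mk_eq_zero_iff]
        refine ⟨y, hrs.1 ?_⟩
        simp only
        rw [← hv, smul_comm]
      have hxp : x ∉ p.asIdeal := fun hxp => hwb _ <| Classical.choose_spec <|
        (quotSMulTop_mk_eq_zero_iff b w).1 <| hxb <| by
          simp only [smul_zero]
          rw [← Submodule.Quotient.mk_smul, quotSMulTop_mk_eq_zero_iff]
          exact hwp x hxp
      obtain ⟨t, htp, htx⟩ := exists_smul_eq_zero_of_isSMulRegular (I := p.asIdeal)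
        (z := (Submodule.Quotient.mk w : QuotSMulTop b M)) (hmem x (by simp)) hxb
        (fun h => hwb _ (Classical.choose_spec ((quotSMulTop_mk_eq_zero_iff b w).1 h)))
        (fun c hc => by
          rw [← Submodule.Quotient.mk_smul, quotSMulTop_mk_eq_zero_iff]
          exact hwp c hc)
      obtain ⟨t, rfl⟩ := Submodule.Quotient.mk_surjective _ t
      have ht0 : (Submodule.Quotient.mk (Submodule.Quotient.mk t : QuotSMulTop x M) :
          QuotSMulTop b (QuotSMulTop x M)) ≠ 0 := fun h => by
        obtain ⟨y, hy⟩ := (quotSMulTop_mk_eq_zero_iff b _).1 h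
        obtain ⟨y, rfl⟩ := Submodule.Quotient.mk_surjective _ y
        rw [eq_comm, ← sub_eq_zero, ← Submodule.Quotient.mk_smul, ← Submodule.Quotient.mk_sub,
          quotSMulTop_mk_eq_zero_iff] at hy
        obtain ⟨s, hs⟩ := hy
        refine htx (Submodule.Quotient.mk s) ?_
        rw [eq_comm, ← sub_eq_zero, ← Submodule.Quotient.mk_smul, ← Submodule.Quotient.mk_sub,
          quotSMulTop_mk_eq_zero_iff]
        exact ⟨y, by rw [hs]; abel⟩
      obtain ⟨q, hq, r, hr, hrq⟩ := exists_prime_smul_eq_zero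
        (I := p.asIdeal ⊔ Ideal.span {x}) ht0 (by
          intro e he
          obtain ⟨f, hf, c, hc, rfl⟩ := Submodule.mem_sup.1 he
          obtain ⟨c, rfl⟩ := Ideal.mem_span_singleton.1 hc
          have h1 := htp f hf
          rw [← Submodule.Quotient.mk_smul, quotSMulTop_mk_eq_zero_iff] at h1
          obtain ⟨y, hy⟩ := h1
          rw [← Submodule.Quotient.mk_smul, quotSMulTop_mk_eq_zero_iff]
          refine ⟨Submodule.Quotient.mk y, ?_⟩
          rw [← Submodule.Quotient.mk_smul, hy, eq_comm, ← sub_eq_zero,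
            ← Submodule.Quotient.mk_smul, ← Submodule.Quotient.mk_sub, quotSMulTop_mk_eq_zero_iff]
          exact ⟨c • t, by rw [add_smul, mul_smul]; abel⟩)
      obtain ⟨r, rfl⟩ := Submodule.Quotient.mk_surjective _ r
      have hlt : p < q := lt_of_le_of_ne (le_sup_left.trans hq) fun h =>
        hxp (h ▸ hq (Ideal.mem_sup_right (Ideal.mem_span_singleton_self x)))
      calc ((x :: rs).length : ℕ∞) = rs.length + 1 := by simp
        _ ≤ Order.coheight q + 1 + 1 := by
          gcongr
          refine ih hmem' hrs.2 q hbx (z := r) (fun y hy => hr ?_) fun c hc => ?_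
          · exact (quotSMulTop_mk_eq_zero_iff b r).2 ⟨y, hy⟩
          · have := hrq c hc
            rwa [← Submodule.Quotient.mk_smul, quotSMulTop_mk_eq_zero_iff] at this
        _ ≤ Order.coheight p + 1 := by
          gcongr
          exact Order.coheight_add_one_le hlt
    · obtain ⟨q, hq, hpq⟩ : ∃ q ∈ associatedPrimes A (QuotSMulTop x M), p.asIdeal ≤ q := by
        refine (Ideal.subset_union_prime_finite (associatedPrimes.finite A (QuotSMulTop x M)) ⊥ ⊥
          (f := id) (fun q hq _ _ => hq.isPrime)).1 ?_
        refine Set.Subset.trans (fun b hb => ?_)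
          (biUnion_associatedPrimes_eq_compl_regular A (QuotSMulTop x M)).superset
        exact fun h => hbad ⟨b, hb, h⟩
      obtain ⟨hprime, w, rfl⟩ := isAssociatedPrime_iff.1 hq
      have hw : w ≠ 0 := by
        rintro rfl
        exact hprime.ne_top (by simp)
      have hlen := length_le_coheight_of_smul_eq_zero hmem' hrs.2 ⟨_, hprime⟩ hw
        (fun c hc => by simpa [Submodule.mem_colon_singleton] using hc)
      calc ((x :: rs).length : ℕ∞) = rs.length + 1 := by simp
        _ ≤ Order.coheight p + 1 := by
          gcongr
          exact hlen.trans (Order.coheight_anti (show p ≤ ⟨_, hprime⟩ from hpq))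

end LocalAlgebra

section Faces

variable {n : ℕ} {S : AddSubmonoid (Fin n → ℤ)} {H : Set (Fin n → ℤ)}

theorem IsFaceOfSemigroup.add_mem (hH : IsFaceOfSemigroup S H) {a b : Fin n → ℤ} (ha : a ∈ H)
    (hb : b ∈ H) : a + b ∈ H :=
  (hH.2.2 a (hH.1 ha) b (hH.1 hb)).2 ⟨ha, hb⟩

theorem IsFaceOfSemigroup.nsmul_mem (hH : IsFaceOfSemigroup S H) {a : Fin n → ℤ} (ha : a ∈ H)
    (m : ℕ) : m • a ∈ H := by
  induction m with
  | zero => simpa using hH.2.1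
  | succ m ih => rw [succ_nsmul]; exact hH.add_mem ih ha

theorem IsFaceOfSemigroup.exists_eq_sub_of_mem_closure (hH : IsFaceOfSemigroup S H)
    {z : Fin n → ℤ} (hz : z ∈ AddSubgroup.closure H) : ∃ a ∈ H, ∃ b ∈ H, z = a - b := by
  induction hz using AddSubgroup.closure_induction with
  | mem x hx => exact ⟨x, hx, 0, hH.2.1, by simp⟩
  | zero => exact ⟨0, hH.2.1, 0, hH.2.1, by simp⟩
  | add x y _ _ hx hy =>
    obtain ⟨a, ha, b, hb, rfl⟩ := hx
    obtain ⟨c, hc, e, he, rfl⟩ := hy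
    exact ⟨a + c, hH.add_mem ha hc, b + e, hH.add_mem hb he, by abel⟩
  | neg x _ hx =>
    obtain ⟨a, ha, b, hb, rfl⟩ := hx
    exact ⟨b, hb, a, ha, by abel⟩

theorem isFaceOfSemigroup_self : IsFaceOfSemigroup S (S : Set (Fin n → ℤ)) :=
  ⟨subset_rfl, S.zero_mem, fun _ ha _ hb => ⟨fun _ => ⟨ha, hb⟩, fun _ => S.add_mem ha hb⟩⟩

theorem isFaceOfSemigroup_zero (hpointed : ∀ a ∈ S, -a ∈ S → a = 0) :
    IsFaceOfSemigroup S {0} := by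
  refine ⟨by simp, by simp, fun a ha b hb => ⟨fun h => ?_, ?_⟩⟩
  · have h0 : a + b = 0 := h
    have ha0 : a = 0 := hpointed a ha (by rwa [neg_eq_of_add_eq_zero_right h0])
    subst ha0
    exact ⟨rfl, by simpa using h0⟩
  · rintro ⟨rfl, rfl⟩
    simp

/-- `intVecToRat` as an additive homomorphism. -/
def intVecToRatHom (n : ℕ) : (Fin n → ℤ) →+ (Fin n → ℚ) where
  toFun := intVecToRat
  map_zero' := by ext; simp [intVecToRat]
  map_add' a b := by ext; simp [intVecToRat]

theorem intVecToRatHom_injective (n : ℕ) : Function.Injective (intVecToRatHom n) := fun a b h => by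
  ext i
  exact Int.cast_injective (α := ℚ) (congrFun h i)

theorem IsFaceOfSemigroup.exists_nsmul_of_mem_span (hH : IsFaceOfSemigroup S H) {v : Fin n → ℚ}
    (hv : v ∈ Submodule.span ℚ (intVecToRat '' H)) :
    ∃ N : ℕ, 0 < N ∧ ∃ a ∈ H, ∃ b ∈ H,
      N • v = intVecToRatHom n a - intVecToRatHom n b := by
  induction hv using Submodule.span_induction with
  | mem x hx =>
    obtain ⟨a, ha, rfl⟩ := hx
    exact ⟨1, one_pos, a, ha, 0, hH.2.1, by rw [map_zero, sub_zero, one_smul]; rfl⟩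
  | zero => exact ⟨1, one_pos, 0, hH.2.1, 0, hH.2.1, by simp⟩
  | add x y _ _ hx hy =>
    obtain ⟨N, hN, a, ha, b, hb, hab⟩ := hx
    obtain ⟨M, hM, c, hc, e, he, hce⟩ := hy
    refine ⟨N * M, by positivity, M • a + N • c, hH.add_mem (hH.nsmul_mem ha M) (hH.nsmul_mem hc N),
      M • b + N • e, hH.add_mem (hH.nsmul_mem hb M) (hH.nsmul_mem he N), ?_⟩
    rw [smul_add, mul_comm, mul_smul, hab, mul_comm, mul_smul, hce]
    simp only [map_add, map_nsmul, smul_sub]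
    abel
  | smul q x _ hx =>
    obtain ⟨N, hN, a, ha, b, hb, hab⟩ := hx
    have key : (q.den * N) • (q • x) = q.num • (N • x) := by
      have hq : (q.den : ℚ) * q = q.num := Rat.den_mul_eq_num q
      rw [← Nat.cast_smul_eq_nsmul ℚ, ← Nat.cast_smul_eq_nsmul ℚ, ← Int.cast_smul_eq_zsmul ℚ,
        smul_smul, smul_smul, ← hq]
      congr 1
      push_cast
      ring
    have hpos : 0 < q.den * N := Nat.mul_pos q.den_pos hN
    obtain ⟨m, hm | hm⟩ := q.num.eq_nat_or_neg
    · refine ⟨_, hpos, m • a, hH.nsmul_mem ha m, m • b, hH.nsmul_mem hb m, ?_⟩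
      rw [key, hab, hm]
      simp only [natCast_zsmul, map_nsmul, smul_sub]
    · refine ⟨_, hpos, m • b, hH.nsmul_mem hb m, m • a, hH.nsmul_mem ha m, ?_⟩
      rw [key, hab, hm]
      simp only [neg_smul, natCast_zsmul, map_nsmul, smul_sub]
      abel

theorem IsFaceOfSemigroup.mem_of_add_mem_span (hH : IsFaceOfSemigroup S H) {s t : Fin n → ℤ}
    (hs : s ∈ S) (ht : t ∈ S)
    (hst : intVecToRatHom n (s + t) ∈ Submodule.span ℚ (intVecToRat '' H)) : s ∈ H := by
  obtain ⟨N, hN, a, ha, b, hb, hab⟩ := hH.exists_nsmul_of_mem_span hst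
  have h : N • (s + t) + b = a := intVecToRatHom_injective n (by
    rw [map_add, map_nsmul, hab, sub_add_cancel])
  obtain ⟨m, rfl⟩ := Nat.exists_eq_add_of_lt hN
  have h' : s + (t + m • (s + t) + b) ∈ H := by
    convert ha using 1
    rw [← h, zero_add, succ_nsmul]
    abel
  exact ((hH.2.2 s hs _ (S.add_mem (S.add_mem ht (S.nsmul_mem (S.add_mem hs ht) m))
    (hH.1 hb))).1 h').1

theorem AddSubmonoid.nsmul_mem_closure_erase {W : Type*} [AddCommMonoid W] [DecidableEq W]
    {T : Finset W} {g : W} {N : ℕ} (hg : N • g ∈ AddSubmonoid.closure (T.erase g : Set W))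
    {w : W} (hw : w ∈ AddSubmonoid.closure (T : Set W)) :
    N • w ∈ AddSubmonoid.closure (T.erase g : Set W) := by
  induction hw using AddSubmonoid.closure_induction with
  | mem x hx =>
    by_cases hxg : x = g
    · rwa [hxg]
    · exact AddSubmonoid.nsmul_mem _ (AddSubmonoid.subset_closure (by simpa [hxg] using hx)) N
  | zero => simp
  | add x y _ _ hx hy => rw [smul_add]; exact add_mem hx hy

theorem AddSubmonoid.exists_eq_nsmul_add_of_mem_closure {W : Type*} [AddCommMonoid W]
    [DecidableEq W] {T : Finset W} (g : W) {w : W} (hw : w ∈ AddSubmonoid.closure (T : Set W)) :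
    ∃ m : ℕ, ∃ x ∈ AddSubmonoid.closure (T.erase g : Set W), w = m • g + x := by
  induction hw using AddSubmonoid.closure_induction with
  | mem x hx =>
    by_cases hxg : x = g
    · exact ⟨1, 0, zero_mem _, by simp [hxg]⟩
    · exact ⟨0, x, AddSubmonoid.subset_closure (by simpa [hxg] using hx), by simp⟩
  | zero => exact ⟨0, 0, zero_mem _, by simp⟩
  | add x y _ _ hx hy =>
    obtain ⟨m, x, hx, rfl⟩ := hx
    obtain ⟨l, y, hy, rfl⟩ := hy
    exact ⟨m + l, x + y, add_mem hx hy, by rw [add_smul]; abel⟩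

/-- A finitely generated submonoid has a finite set of generators up to positive multiples which
is irredundant up to positive multiples. -/
theorem AddSubmonoid.exists_irredundant {W : Type*} [AddCommMonoid W] [DecidableEq W]
    (G : Finset W) : ∃ T : Finset W, T ⊆ G ∧
      (∀ w ∈ AddSubmonoid.closure (G : Set W), ∃ N : ℕ, 0 < N ∧
        N • w ∈ AddSubmonoid.closure (T : Set W)) ∧
      ∀ g ∈ T, ∀ N : ℕ, 0 < N → N • g ∉ AddSubmonoid.closure (T.erase g : Set W) := by
  let P : Finset W → Prop := fun T => ∀ w ∈ AddSubmonoid.closure (G : Set W), ∃ N : ℕ, 0 < N ∧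
    N • w ∈ AddSubmonoid.closure (T : Set W)
  obtain ⟨T, hTG, hT⟩ := exists_minimal_le_of_wellFoundedLT P G
    fun w hw => ⟨1, one_pos, by simpa using hw⟩
  refine ⟨T, hTG, hT.1, fun g hg N hN hmem => ?_⟩
  have : P (T.erase g) := fun w hw => by
    obtain ⟨M, hM, hMw⟩ := hT.1 w hw
    exact ⟨N * M, by positivity, by
      rw [mul_smul]; exact AddSubmonoid.nsmul_mem_closure_erase hmem hMw⟩
  exact Finset.notMem_erase g T (hT.2 this (Finset.erase_subset g T) hg)

/-- Every proper face of an affine semigroup is contained in a face of one dimension more. -/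
theorem IsFaceOfSemigroup.exists_zdim_eq_add_one
    (hfg : ∃ G : Finset (Fin n → ℤ), AddSubmonoid.closure ↑G = S)
    (hH : IsFaceOfSemigroup S H) (hne : H ≠ S) :
    ∃ H', IsFaceOfSemigroup S H' ∧ H ⊆ H' ∧ zdim H' = zdim H + 1 := by
  classical
  obtain ⟨G, rfl⟩ := hfg
  set S := AddSubmonoid.closure (G : Set (Fin n → ℤ)) with hS
  set U := Submodule.span ℚ (intVecToRat '' H) with hU
  let π : (Fin n → ℤ) →+ (Fin n → ℚ) ⧸ U := U.mkQ.toAddMonoidHom.comp (intVecToRatHom n)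
  have hπ : ∀ a, π a = 0 ↔ intVecToRatHom n a ∈ U := fun a => Submodule.Quotient.mk_eq_zero U
  have hmapS : AddSubmonoid.closure ((G.image π : Finset _) : Set ((Fin n → ℚ) ⧸ U)) = S.map π := by
    rw [hS, AddMonoidHom.map_mclosure, Finset.coe_image]
  obtain ⟨T, hTG, hT, hirr⟩ := AddSubmonoid.exists_irredundant (G.image π)
  have hTS : ∀ w ∈ AddSubmonoid.closure (T : Set ((Fin n → ℚ) ⧸ U)), ∃ s ∈ S, π s = w :=
    fun w hw => by
      have := AddSubmonoid.closure_mono (Finset.coe_subset.2 hTG) hw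
      rwa [hmapS] at this
  have hST : ∀ s ∈ S, ∃ N : ℕ, 0 < N ∧
      N • π s ∈ AddSubmonoid.closure (T : Set ((Fin n → ℚ) ⧸ U)) :=
    fun s hs => hT _ (by rw [hmapS]; exact ⟨s, hs, rfl⟩)
  have hpos : ∀ x ∈ AddSubmonoid.closure (T : Set ((Fin n → ℚ) ⧸ U)),
      ∀ y ∈ AddSubmonoid.closure (T : Set ((Fin n → ℚ) ⧸ U)), x + y = 0 → x = 0 := by
    intro x hx y hy hxy
    obtain ⟨s, hs, rfl⟩ := hTS x hx
    obtain ⟨t, ht, rfl⟩ := hTS y hy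
    rw [← map_add, hπ] at hxy
    rw [hπ]
    exact Submodule.subset_span ⟨s, hH.mem_of_add_mem_span hs ht hxy, rfl⟩
  have htors : ∀ (N : ℕ) (w : (Fin n → ℚ) ⧸ U), 0 < N → N • w = 0 → w = 0 := fun N w hN h => by
    rw [← Nat.cast_smul_eq_nsmul ℚ, smul_eq_zero] at h
    exact h.resolve_left (by positivity)
  obtain ⟨g, hg⟩ : T.Nonempty := by
    rw [Finset.nonempty_iff_ne_empty]
    rintro rfl
    refine hne (Set.Subset.antisymm hH.1 fun s hs => ?_)
    obtain ⟨N, hN, hNs⟩ := hST s hs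
    have h0 : π s = 0 := htors N _ hN (by simpa using hNs)
    exact hH.mem_of_add_mem_span hs S.zero_mem (by rwa [add_zero, ← hπ])
  have hgT : g ∈ AddSubmonoid.closure (T : Set ((Fin n → ℚ) ⧸ U)) :=
    AddSubmonoid.subset_closure hg
  have hle : AddSubmonoid.closure (T.erase g : Set ((Fin n → ℚ) ⧸ U)) ≤
      AddSubmonoid.closure (T : Set ((Fin n → ℚ) ⧸ U)) :=
    AddSubmonoid.closure_mono (Finset.coe_subset.2 (Finset.erase_subset g T))
  have hg0 : g ≠ 0 := fun h => hirr g hg 1 one_pos (by rw [h]; simp)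
  obtain ⟨s₀, hs₀, hs₀g⟩ := hTS g hgT
  let H' : Set (Fin n → ℤ) := {s | s ∈ S ∧ ∃ N : ℕ, 0 < N ∧ ∃ c : ℕ, N • π s = c • g}
  have hleft : ∀ a ∈ S, ∀ b ∈ S, a + b ∈ H' → a ∈ H' := by
    rintro a ha b hb ⟨_, N, hN, c, hc⟩
    obtain ⟨K, hK, hKa⟩ := hST a ha
    obtain ⟨L, hL, hLb⟩ := hST b hb
    obtain ⟨α, x, hx, hαx⟩ := AddSubmonoid.exists_eq_nsmul_add_of_mem_closure g hKa
    obtain ⟨β, y, hy, hβy⟩ := AddSubmonoid.exists_eq_nsmul_add_of_mem_closure g hLb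
    have key : (N * (L * α + K * β)) • g + ((N * L) • x + (N * K) • y) = (K * L * c) • g := by
      rw [mul_smul (K * L), ← hc, map_add]
      have h1 : (K * L) • N • (π a + π b) = (N * L) • (K • π a) + (N * K) • (L • π b) := by
        simp only [smul_add, smul_smul]
        congr 2 <;> ring
      rw [h1, hαx, hβy]
      simp only [smul_add, smul_smul, mul_add, add_smul]
      rw [show N * L * α = N * (L * α) by ring, show N * K * β = N * (K * β) by ring]
      abel
    refine ⟨ha, K, hK, α, ?_⟩
    obtain hlt | hge := lt_or_ge (N * (L * α + K * β)) (K * L * c)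
    · obtain ⟨m, hm⟩ := Nat.exists_eq_add_of_lt hlt
      rw [hm, add_assoc, add_smul, add_right_inj] at key
      exact absurd (key ▸ AddSubmonoid.add_mem _ (AddSubmonoid.nsmul_mem _ hx _)
        (AddSubmonoid.nsmul_mem _ hy _))
        (hirr g hg (m + 1) (Nat.succ_pos m))
    · obtain ⟨m, hm⟩ := Nat.exists_eq_add_of_le hge
      rw [hm, add_smul, add_assoc, add_eq_left] at key
      have hx0 : (N * L) • x = 0 := hpos _ (AddSubmonoid.nsmul_mem _ (hle hx) _)
        (m • g + (N * K) • y) (AddSubmonoid.add_mem _ (AddSubmonoid.nsmul_mem _ hgT _)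
          (AddSubmonoid.nsmul_mem _ (hle hy) _)) (by rw [← key]; abel)
      rw [hαx, htors (N * L) x (by positivity) hx0, add_zero]
  have hHH' : H ⊆ H' := fun s hs => ⟨hH.1 hs, 1, one_pos, 0, by
    rw [one_smul, zero_smul, hπ]; exact Submodule.subset_span ⟨s, hs, rfl⟩⟩
  refine ⟨H', ⟨fun s hs => hs.1, hHH' hH.2.1, fun a ha b hb => ⟨fun h =>
    ⟨hleft a ha b hb h, hleft b hb a ha (by rwa [add_comm])⟩, ?_⟩⟩, hHH', ?_⟩
  · rintro ⟨⟨_, N, hN, c, hc⟩, _, M, hM, e, he⟩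
    refine ⟨S.add_mem ha hb, N * M, by positivity, M * c + N * e, ?_⟩
    rw [map_add, smul_add, mul_comm, mul_smul, hc, mul_comm, mul_smul, he, add_smul, mul_smul,
      mul_smul]
  · have hspan : Submodule.span ℚ (intVecToRat '' H') =
        U ⊔ Submodule.span ℚ {intVecToRatHom n s₀} := by
      apply le_antisymm
      · rw [Submodule.span_le]
        rintro _ ⟨s, ⟨_, N, hN, c, hc⟩, rfl⟩
        have hmem : intVecToRatHom n (N • s - c • s₀) ∈ U := by
          rw [← hπ, map_sub, map_nsmul, map_nsmul, hs₀g, hc, sub_self]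
        have hN' : (N : ℚ) ≠ 0 := by positivity
        have hs : intVecToRat s = (N : ℚ)⁻¹ • intVecToRatHom n (N • s - c • s₀) +
            ((N : ℚ)⁻¹ * c) • intVecToRatHom n s₀ := by
          ext i
          simp [intVecToRatHom, intVecToRat]
          field_simp
          ring
        rw [hs]
        exact Submodule.add_mem_sup (U.smul_mem _ hmem)
          (Submodule.smul_mem _ _ (Submodule.mem_span_singleton_self _))
      · refine sup_le (Submodule.span_mono (Set.image_mono hHH')) ?_
        rw [Submodule.span_singleton_le_iff_mem]
        exact Submodule.subset_span ⟨s₀, ⟨hs₀, 1, one_pos, 1, by rw [hs₀g]⟩, rfl⟩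
    rw [zdim, hspan, Submodule.finrank_sup_span_singleton, zdim]
    rwa [← hπ, hs₀g]

/-- Every proper face of an affine semigroup is contained in a facet. -/
theorem IsFaceOfSemigroup.exists_facet
    (hfg : ∃ G : Finset (Fin n → ℤ), AddSubmonoid.closure ↑G = S)
    (hH : IsFaceOfSemigroup S H) (hne : H ≠ S) :
    ∃ F, IsFaceOfSemigroup S F ∧ H ⊆ F ∧ F ≠ S ∧ zdim F + 1 = zdim (S : Set (Fin n → ℤ)) := by
  induction hm : n - zdim H using Nat.strong_induction_on generalizing H with
  | _ m ih =>
    obtain ⟨H', hH', hHH', hdim⟩ := hH.exists_zdim_eq_add_one hfg hne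
    by_cases hS : H' = S
    · exact ⟨H, hH, subset_rfl, hne, by rw [← hS, hdim]⟩
    · have hle : zdim H' ≤ n := (Submodule.finrank_le _).trans (by simp)
      obtain ⟨F, hF, hH'F, hFS⟩ := ih (n - zdim H') (by omega) hH' hS rfl
      exact ⟨F, hF, hHH'.trans hH'F, hFS⟩

end Faces

section SemigroupRing

variable (k : Type*) [Field k] {n : ℕ} {S : AddSubmonoid (Fin n → ℤ)} {G : Set (Fin n → ℤ)}

open Classical in
/-- The ring homomorphism from `k[S]` to the Laurent polynomial ring which keeps the monomials of
the face `G` and kills all others. -/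
def faceHom (hG : IsFaceOfSemigroup S G) :
    AddMonoidAlgebra k S →ₐ[k] AddMonoidAlgebra k (Fin n → ℤ) :=
  AddMonoidAlgebra.lift k _ S
    { toFun := fun s => if (s.toAdd : Fin n → ℤ) ∈ G then AddMonoidAlgebra.single s.toAdd.1 1 else 0
      map_one' := by simp [hG.2.1, AddMonoidAlgebra.one_def]
      map_mul' := fun a b => by
        have h := hG.2.2 _ a.toAdd.2 _ b.toAdd.2
        by_cases ha : (a.toAdd : Fin n → ℤ) ∈ G <;> by_cases hb : (b.toAdd : Fin n → ℤ) ∈ G <;>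
          simp [h, ha, hb, AddMonoidAlgebra.single_mul_single] }

open Classical in
theorem faceHom_single (hG : IsFaceOfSemigroup S G) (s : S) (c : k) :
    faceHom k hG (AddMonoidAlgebra.single s c) =
      if (s : Fin n → ℤ) ∈ G then AddMonoidAlgebra.single s.1 c else 0 := by
  simp [faceHom, AddMonoidAlgebra.lift_single]

/-- The prime ideal of `k[S]` generated by the monomials outside the face `G`. -/
def facePrime (hG : IsFaceOfSemigroup S G) : PrimeSpectrum (AddMonoidAlgebra k S) :=
  ⟨RingHom.ker (faceHom k hG), RingHom.ker_isPrime _⟩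

variable {k}

theorem single_one_mem_facePrime_iff (hG : IsFaceOfSemigroup S G) (s : S) :
    AddMonoidAlgebra.single s (1 : k) ∈ (facePrime k hG).asIdeal ↔ (s : Fin n → ℤ) ∉ G := by
  simp [facePrime, RingHom.mem_ker, faceHom_single]

open Classical in
theorem coeff_faceHom (hG : IsFaceOfSemigroup S G) (f : AddMonoidAlgebra k S) (s : S) :
    (faceHom k hG f).coeff s = if (s : Fin n → ℤ) ∈ G then f.coeff s else 0 := by
  induction f using AddMonoidAlgebra.induction_linear with
  | zero => simp
  | add f g hf hg =>
    simp only [map_add, AddMonoidAlgebra.coeff_add, Finsupp.add_apply, hf, hg]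
    split_ifs <;> simp
  | single t c =>
    rw [faceHom_single]
    by_cases hst : t = s
    · subst hst
      split_ifs <;> simp
    · have : (t : Fin n → ℤ) ≠ s := fun h => hst (Subtype.ext h)
      split_ifs <;> simp [hst, this]

theorem AddMonoidAlgebra.mem_ideal_of_single_mem {M : Type*} [AddMonoid M]
    {f : AddMonoidAlgebra k M} {J : Ideal (AddMonoidAlgebra k M)}
    (h : ∀ s, f.coeff s ≠ 0 → AddMonoidAlgebra.single s (1 : k) ∈ J) : f ∈ J := by
  rw [← AddMonoidAlgebra.sum_coeff_single f]
  refine Submodule.sum_mem _ fun s hs => ?_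
  have : AddMonoidAlgebra.single s (f.coeff s) =
      AddMonoidAlgebra.single 0 (f.coeff s) * AddMonoidAlgebra.single s (1 : k) := by
    simp [AddMonoidAlgebra.single_mul_single]
  rw [this]
  exact J.mul_mem_left _ (h s (Finsupp.mem_support_iff.1 hs))

theorem mem_facePrime_iff (hG : IsFaceOfSemigroup S G) (f : AddMonoidAlgebra k S) :
    f ∈ (facePrime k hG).asIdeal ↔ ∀ s : S, (s : Fin n → ℤ) ∈ G → f.coeff s = 0 := by
  refine ⟨fun h s hs => ?_, fun h => AddMonoidAlgebra.mem_ideal_of_single_mem fun s hs => ?_⟩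
  · have h0 : faceHom k hG f = 0 := h
    have := coeff_faceHom hG f s
    rw [h0, if_pos hs] at this
    simpa using this.symm
  · rw [single_one_mem_facePrime_iff]
    exact fun hsG => hs (h s hsG)

theorem isDomain_addMonoidAlgebra (k : Type*) [Field k] (S : AddSubmonoid (Fin n → ℤ)) :
    IsDomain (AddMonoidAlgebra k S) := by
  refine Function.Injective.isDomain (faceHom k (isFaceOfSemigroup_self (S := S))).toRingHom ?_
  rw [injective_iff_map_eq_zero]
  intro f hf
  ext s
  exact (mem_facePrime_iff isFaceOfSemigroup_self f).1 hf s s.2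

theorem IsRegularSeq.isWeaklyRegular {R : Type*} [CommRing R] {l : List R} (h : IsRegularSeq l) :
    RingTheory.Sequence.IsWeaklyRegular R l := by
  refine ⟨fun i hi => ?_⟩
  rw [isSMulRegular_quotient_iff_mem_of_smul_mem]
  intro x hx
  rw [smul_eq_mul, Ideal.mul_top] at hx ⊢
  exact h.1 i hi x (by rw [mul_comm]; exact hx)

/-- If `k[S]` is Cohen-Macaulay, then for `s - t ∉ S` the monomials `i` with `s - t + i ∈ S` are
contained in a prime ideal of height at most one. -/
theorem exists_prime_of_sub_notMem
    (hfg : ∃ G : Finset (Fin n → ℤ), AddSubmonoid.closure ↑G = S)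
    (hpointed : ∀ a ∈ S, -a ∈ S → a = 0) (hCM : IsCMWrt (sgMaxIdealZ k S)) (s t : S)
    (hst : (s : Fin n → ℤ) - t ∉ S) :
    ∃ p : PrimeSpectrum (AddMonoidAlgebra k S), Order.height p ≤ 1 ∧
      ∀ i : S, (s : Fin n → ℤ) - t + i ∈ S → AddMonoidAlgebra.single i (1 : k) ∈ p.asIdeal := by
  obtain ⟨l, hlm, hl, hdim⟩ := hCM
  have hfgS : AddMonoid.FG S := by
    obtain ⟨G, hG⟩ := hfg
    exact (AddMonoid.fg_iff_addSubmonoid_fg S).2 ⟨G, hG⟩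
  have hnoeth : IsNoetherianRing (AddMonoidAlgebra k S) :=
    Algebra.FiniteType.isNoetherianRing k _
  have hzero := isFaceOfSemigroup_zero hpointed
  let m : PrimeSpectrum (AddMonoidAlgebra k S) := facePrime k hzero
  have hm : sgMaxIdealZ k S ≤ m.asIdeal := by
    rw [sgMaxIdealZ, Ideal.span_le]
    rintro _ ⟨a, ha, rfl⟩
    exact (single_one_mem_facePrime_iff hzero a).2 (by simpa using ha)
  let A := Localization.AtPrime m.asIdeal
  have hreg : RingTheory.Sequence.IsWeaklyRegular A (l.map (algebraMap _ A)) :=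
    hl.isWeaklyRegular.of_isLocalization A m.asIdeal.primeCompl
  have hmem : ∀ x ∈ l.map (algebraMap _ A), x ∈ IsLocalRing.maximalIdeal A := by
    intro x hx
    obtain ⟨y, hy, rfl⟩ := List.mem_map.1 hx
    exact (IsLocalization.AtPrime.to_map_mem_maximal_iff A m.asIdeal y).2 (hm (hlm y hy))
  have : IsNoetherianRing A := IsLocalization.isNoetherianRing m.asIdeal.primeCompl A hnoeth
  let X : S → AddMonoidAlgebra k S := fun i => AddMonoidAlgebra.single i 1
  have hdom : IsDomain (AddMonoidAlgebra k S) := isDomain_addMonoidAlgebra k S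
  have hinj : Function.Injective (algebraMap (AddMonoidAlgebra k S) A) :=
    IsLocalization.injective A m.asIdeal.primeCompl_le_nonZeroDivisors
  have hdomA : IsDomain A :=
    IsLocalization.isDomain_of_le_nonZeroDivisors A m.asIdeal.primeCompl_le_nonZeroDivisors
  have ha : IsSMulRegular A (algebraMap _ A (X t)) := by
    have h0 : algebraMap _ A (X t) ≠ 0 := fun h => by
      rw [map_eq_zero_iff _ hinj, AddMonoidAlgebra.single_eq_zero] at h
      exact one_ne_zero h
    exact fun u v huv => mul_left_cancel₀ h0 huv
  have hz : ∀ y, algebraMap _ A (X t) • y ≠ algebraMap _ A (X s) := by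
    intro y hy
    obtain ⟨⟨f, c⟩, hfc⟩ := IsLocalization.surj m.asIdeal.primeCompl y
    have h1 : algebraMap _ A (X s * c) = algebraMap _ A (X t * f) := by
      rw [map_mul, map_mul, ← hy, ← hfc, smul_eq_mul, mul_assoc]
    have h2 : X s * c = X t * f := hinj h1
    refine c.2 ((mem_facePrime_iff hzero _).2 fun r hr => ?_)
    obtain rfl : r = 0 := Subtype.ext hr
    have h3 := congrArg (fun g => g.coeff (s + 0)) h2
    simp only [X] at h3
    rw [AddMonoidAlgebra.coeff_single_mul_add, AddMonoidAlgebra.coeff_single_mul_of_forall_add_ne]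
      at h3
    · simpa using h3
    · rintro e he
      refine hst ?_
      have : (s : Fin n → ℤ) - t = e := by
        rw [sub_eq_iff_eq_add', ← AddSubmonoid.coe_add, he, add_zero]
      rw [this]
      exact e.2
  let z : QuotSMulTop (algebraMap _ A (X t)) A := Submodule.Quotient.mk (algebraMap _ A (X s))
  have hz0 : z ≠ 0 := fun h => by
    obtain ⟨y, hy⟩ := (quotSMulTop_mk_eq_zero_iff _ _).1 h
    exact hz y hy
  obtain ⟨q, hq, w, hw, hwq⟩ := exists_prime_smul_eq_zero
    (I := LinearMap.ker (LinearMap.toSpanSingleton A _ z)) hz0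
    (fun a ha => ha)
  obtain ⟨w, rfl⟩ := Submodule.Quotient.mk_surjective _ w
  let p : PrimeSpectrum (AddMonoidAlgebra k S) := PrimeSpectrum.comap (algebraMap _ A) q
  have hlen := length_le_coheight_add_one hmem hreg q ha (z := w)
    (fun y hy => hw ((quotSMulTop_mk_eq_zero_iff _ _).2 ⟨y, hy⟩))
    (fun c hc => by
      have := hwq c hc
      rwa [← Submodule.Quotient.mk_smul, quotSMulTop_mk_eq_zero_iff] at this)
  have hcoh : Order.coheight q ≤ Order.coheight p :=
    Order.coheight_le_coheight_apply_of_strictMono (PrimeSpectrum.comap (algebraMap _ A))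
      (Monotone.strictMono_of_injective (fun _ _ h => Ideal.comap_mono h)
        (PrimeSpectrum.localization_comap_injective A m.asIdeal.primeCompl)) q
  rw [List.length_map] at hlen
  have hsum : Order.height p + Order.coheight p ≤ l.length := by
    rw [ringKrullDim, Order.krullDim_eq_iSup_height_add_coheight_of_nonempty] at hdim
    have hdim' : (l.length : ℕ∞) =
        ⨆ a : PrimeSpectrum (AddMonoidAlgebra k S), Order.height a + Order.coheight a :=
      WithBot.coe_injective hdim
    rw [hdim']
    exact le_iSup (fun a => Order.height a + Order.coheight a) p
  refine ⟨p, ?_, fun i hi => hq ?_⟩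
  · have hfin : Order.coheight p ≠ ⊤ := fun h => by
      rw [h, add_top, top_le_iff] at hsum
      exact ENat.natCast_ne_top _ hsum
    refine (ENat.add_le_add_iff_right hfin).1 ?_
    calc Order.height p + Order.coheight p ≤ l.length := hsum
      _ ≤ Order.coheight q + 1 := hlen
      _ ≤ 1 + Order.coheight p := by rw [add_comm]; gcongr
  · rw [LinearMap.mem_ker, LinearMap.toSpanSingleton_apply, ← Submodule.Quotient.mk_smul,
      quotSMulTop_mk_eq_zero_iff]
    refine ⟨algebraMap _ A (X ⟨_, hi⟩), ?_⟩
    rw [smul_eq_mul, smul_eq_mul, ← map_mul, ← map_mul]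
    congr 1
    simp only [X, AddMonoidAlgebra.single_mul_single, mul_one]
    congr 1
    ext1
    push_cast
    abel

/-- A prime ideal of `k[S]` of height at most one avoids the monomials of some facet of `S`,
provided it contains some monomial. -/
theorem exists_facet_of_height_le_one
    (hfg : ∃ G : Finset (Fin n → ℤ), AddSubmonoid.closure ↑G = S)
    (p : PrimeSpectrum (AddMonoidAlgebra k S)) (hp : Order.height p ≤ 1) (t : S)
    (ht : AddMonoidAlgebra.single t (1 : k) ∈ p.asIdeal) :
    ∃ F, IsFaceOfSemigroup S F ∧ zdim F + 1 = zdim (S : Set (Fin n → ℤ)) ∧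
      ∀ i : S, (i : Fin n → ℤ) ∈ F → AddMonoidAlgebra.single i (1 : k) ∉ p.asIdeal := by
  let G : Set (Fin n → ℤ) :=
    {a | ∃ h : a ∈ S, AddMonoidAlgebra.single (⟨a, h⟩ : S) (1 : k) ∉ p.asIdeal}
  have hG : IsFaceOfSemigroup S G := by
    refine ⟨fun a ha => ha.1, ⟨S.zero_mem, fun h => p.2.ne_top (p.asIdeal.eq_top_iff_one.2 h)⟩,
      fun a ha b hb => ?_⟩
    have hab : AddMonoidAlgebra.single (⟨a + b, S.add_mem ha hb⟩ : S) (1 : k) =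
        AddMonoidAlgebra.single (⟨a, ha⟩ : S) 1 * AddMonoidAlgebra.single (⟨b, hb⟩ : S) 1 := by
      simp [AddMonoidAlgebra.single_mul_single]
    simp only [G, Set.mem_ofPred_eq, ha, hb, S.add_mem ha hb, exists_true_left, hab,
      p.2.mul_mem_iff_mem_or_mem, not_or]
  have hGS : G ≠ S := fun h => by
    have htG : (t : Fin n → ℤ) ∈ G := h ▸ t.2
    exact htG.2 ht
  obtain ⟨F, hF, hGF, hFS, hdim⟩ := hG.exists_facet hfg hGS
  refine ⟨F, hF, hdim, fun i hi hip => ?_⟩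
  have hdom : IsDomain (AddMonoidAlgebra k S) := isDomain_addMonoidAlgebra k S
  have hle : facePrime k hF ≤ p := fun f hf =>
    AddMonoidAlgebra.mem_ideal_of_single_mem fun s hs => by
      by_contra hsp
      exact hs ((mem_facePrime_iff hF f).1 hf s (hGF ⟨s.2, hsp⟩))
  have hlt : facePrime k hF < p := lt_of_le_of_ne hle fun h =>
    (single_one_mem_facePrime_iff hF i).1 (h ▸ hip) hi
  have hbot : ⊥ < facePrime k hF := by
    obtain ⟨s, hsS, hsF⟩ := Set.exists_of_ssubset (LE.le.ssubset_of_ne hF.1 hFS)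
    refine bot_lt_iff_ne_bot.2 fun h => ?_
    have hs := (single_one_mem_facePrime_iff (k := k) hF ⟨s, hsS⟩).2 hsF
    rw [h] at hs
    exact one_ne_zero (AddMonoidAlgebra.single_eq_zero.1 (Ideal.mem_bot.1 hs))
  have h1 := Order.height_add_one_le hbot
  have h2 := Order.height_add_one_le hlt
  have : (1 + 1 : ℕ∞) ≤ 1 := calc
    (1 + 1 : ℕ∞) ≤ Order.height (facePrime k hF) + 1 := by
      gcongr
      exact le_add_self.trans h1
    _ ≤ 1 := h2.trans hp
  exact absurd this (by decide)

end SemigroupRing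

/-- from the proof of Theorem 4.3, via Katthän's theorems: let `S` be
a pointed affine semigroup of dimension `d` with `k[S]` Cohen-Macaulay, and let
`v, v' ∈ ℤS` with `v' - v ∈ S̄ \ S` a hole.  Then there is a facet `F` of `S` with
`((v'-v) + ℤF) ∩ S = ∅`; in particular there are an extremal ray `l` of `S` and
`a ∈ l` with `(v'-v) + a ∉ S`. -/
theorem hole_avoids_facet (k : Type*) [Field k] {n d : ℕ}
    (S : AddSubmonoid (Fin n → ℤ))
    -- `S` is a pointed affine semigroup of dimension `d`:
    (hfg : ∃ G : Finset (Fin n → ℤ), AddSubmonoid.closure ↑G = S)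
    (hpointed : ∀ a ∈ S, -a ∈ S → a = 0)
    (hdim : zdim (S : Set (Fin n → ℤ)) = d)
    -- `k[S]` is Cohen-Macaulay:
    (hCM : IsCMWrt (sgMaxIdealZ k S))
    -- `v, v' ∈ ℤS` and `v' - v` is a hole, i.e. lies in `S̄ = ℤS ∩ ℝ≥0·S` but not in `S`:
    (v v' : Fin n → ℤ)
    (hv : v ∈ AddSubgroup.closure (S : Set (Fin n → ℤ)))
    (hv' : v' ∈ AddSubgroup.closure (S : Set (Fin n → ℤ)))
    (hcone : ∃ m : ℕ, 0 < m ∧ m • (v' - v) ∈ S)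
    (hZS : v' - v ∈ AddSubgroup.closure (S : Set (Fin n → ℤ)))
    (hnotS : v' - v ∉ S) :
    (∃ F : Set (Fin n → ℤ), IsFaceOfSemigroup S F ∧ zdim F = d - 1 ∧
      ∀ z ∈ AddSubgroup.closure F, v' - v + z ∉ S) ∧
    (∃ l : Set (Fin n → ℤ), IsFaceOfSemigroup S l ∧ zdim l = 1 ∧
      ∃ a ∈ l, v' - v + a ∉ S) := by
  have hS := isFaceOfSemigroup_self (S := S)
  obtain ⟨s, hs, t, ht, hst⟩ := hS.exists_eq_sub_of_mem_closure hZS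
  refine ⟨?_, ?_⟩
  · obtain ⟨p, hp, hpi⟩ := exists_prime_of_sub_notMem hfg hpointed hCM ⟨s, hs⟩ ⟨t, ht⟩
      (by rwa [← hst])
    obtain ⟨F, hF, hFdim, hFp⟩ := exists_facet_of_height_le_one hfg p hp ⟨t, ht⟩
      (hpi _ (by simpa using hs))
    refine ⟨F, hF, by omega, fun z hz hzS => ?_⟩
    obtain ⟨a, ha, b, hb, rfl⟩ := hF.exists_eq_sub_of_mem_closure hz
    refine hFp ⟨a, hF.1 ha⟩ ha (hpi _ ?_)
    have := S.add_mem hzS (hF.1 hb)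
    rwa [add_assoc, sub_add_cancel, hst] at this
  · have hzero := isFaceOfSemigroup_zero hpointed
    have hne : ({0} : Set (Fin n → ℤ)) ≠ S := fun h => by
      rw [← h] at hs ht
      rw [hst, hs, ht, sub_zero] at hnotS
      exact hnotS S.zero_mem
    obtain ⟨l, hl, -, hldim⟩ := hzero.exists_zdim_eq_add_one hfg hne
    refine ⟨l, hl, ?_, 0, hl.2.1, by rwa [add_zero]⟩
    have h0 : intVecToRat (0 : Fin n → ℤ) = 0 := map_zero (intVecToRatHom n)
    rw [hldim, zdim, Set.image_singleton, h0, Submodule.span_zero_singleton, finrank_bot]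

end
end
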